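/- arXiv:1911.11016 — 2 statements merged into one kernel-verified Lean document; each statement's English description precedes it below -/
import Mathlib

section
/- For every t > 0, the supremum over all integers n ≥ 1 of |tC_n^eucl|_Rips equals e^{−2t} + 2πt·Σ_{r odd} (1/r)·e^{−2t·cos(π/(2r))}·sin(π/(2r)), where the sum is over all odd positive integers r. -/
open scoped BigOperators Real

/-- The Rips magnitude function of a finite subset `A` of a metric space:
`|tA|_Rips = Σ_{∅ ≠ B ⊆ A} (−1)^{#B−1} e^{−diam(B)·t}`. -/
noncomputable def ripsMag {Y : Type*} [MetricSpace Y] (A : Finset Y) (t : ℝ) : ℝ :=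
  ∑ B ∈ A.powerset.filter (fun B => B.Nonempty),
    (-1 : ℝ) ^ (B.card - 1) * Real.exp (-(Metric.diam (B : Set Y)) * t)


/-- The Euclidean cycle `C_n^eucl`: `n` equally spaced points on the unit circle
in `ℝ² = ℂ`, with the Euclidean metric. -/
noncomputable def euclCycle (n : ℕ) : Finset ℂ :=
  (Finset.range n).image
    (fun k : ℕ => Complex.exp (2 * (π : ℂ) * (k : ℂ) / (n : ℂ) * Complex.I))

/-- The `r`-th term `(1/r) e^{−2t cos(π/(2r))} sin(π/(2r))` of the limsup series. -/
noncomputable def euclSeriesTerm (t : ℝ) (r : ℕ) : ℝ :=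
  (1 / (r : ℝ)) * Real.exp (-2 * t * Real.cos (π / (2 * (r : ℝ)))) *
    Real.sin (π / (2 * (r : ℝ)))

/-- Any two points of `S` are at circular distance at most `k` modulo `n`. -/
def CircClique (n k : ℤ) (S : Set ℤ) : Prop :=
  ∀ x ∈ S, ∀ y ∈ S, x - y ≤ k ∨ n - k ≤ x - y

/-- `x ∈ S` ends a run: the first point after `x` of the union of `S` with its antipodal
translate `S + n / 2` lies in the translate. -/
def RunEnd (n k : ℤ) (S : Set ℤ) (x : ℤ) : Prop :=
  x ∈ S ∧ ∃ z ∈ S, x ≤ z + k ∧ ∀ y ∈ S, y ≤ x ∨ z + n - k ≤ y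

/-- Invariance of a set of integers under translation by multiples of `n`. -/
def PeriodicSet (n : ℤ) (S : Set ℤ) : Prop := ∀ x ∈ S, ∀ j : ℤ, x + j * n ∈ S

section Combinatorics

variable {n k : ℤ} {S T : Set ℤ}

theorem RunEnd.add_mul (hS : PeriodicSet n S) {x : ℤ} (h : RunEnd n k S x) (j : ℤ) :
    RunEnd n k S (x + j * n) := by
  obtain ⟨hx, z, hz, hxz, hy⟩ := h
  refine ⟨hS x hx j, z + j * n, hS z hz j, by linarith, fun y hyS => ?_⟩
  have := hy _ (hS y hyS (-j))
  rcases this with h | h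
  · left; linarith
  · right; linarith

theorem CircClique.exists_runEnd (hk : 0 ≤ k) (hC : CircClique n k S)
    {x : ℤ} (hx : x ∈ S) : ∃ c, RunEnd n k S c := by
  obtain ⟨c, ⟨hc, hcx⟩, hmax⟩ := Int.exists_greatest_of_bdd (P := fun y => y ∈ S ∧ y ≤ x + k)
    ⟨x + k, fun y hy => hy.2⟩ ⟨x, hx, by omega⟩
  refine ⟨c, hc, x, hx, hcx, fun y hy => ?_⟩
  have h1 := hmax y
  have h2 := hC y hy x hx
  by_cases h : y ≤ x + k
  · exact Or.inl (h1 ⟨hy, h⟩)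
  · right; omega

theorem RunEnd.witness_le (hkn : 2 * k < n) (hk : 0 ≤ k) {c z : ℤ} (hz : z ∈ S)
    (hy : ∀ y ∈ S, y ≤ c ∨ z + n - k ≤ y) : z ≤ c := by
  have := hy z hz
  omega

/-- Adjoining the residue class of `c - k` to a clique in which `c` ends a run. -/
theorem CircClique.adjoin (hk : 0 ≤ k) (hkn : 2 * k < n) (hS : PeriodicSet n S)
    (hC : CircClique n k S) {c : ℤ} (hc : RunEnd n k S c)
    (hT : ∀ x, x ∈ T ↔ x ∈ S ∨ ∃ j : ℤ, x = c - k + j * n) : CircClique n k T := by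
  intro x hx y hy
  rcases (hT x).1 hx with hx | ⟨i, rfl⟩ <;> rcases (hT y).1 hy with hy | ⟨j, rfl⟩
  · exact hC x hx y hy
  · obtain ⟨hcS, z, hz, hcz, he⟩ := hc.add_mul hS j
    have := he x hx
    omega
  · obtain ⟨hcS, z, hz, hcz, he⟩ := hc.add_mul hS (i - 1)
    have e : (i - 1) * n = i * n - n := by ring
    have := he y hy
    omega
  · rcases le_or_gt i j with h | h
    · left; nlinarith
    · right; nlinarith

theorem RunEnd.adjoin_iff (hk : 0 ≤ k) (hkn : 2 * k < n) (hS : PeriodicSet n S)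
    {c : ℤ} (hc : RunEnd n k S c) (hv : c - k ∉ S)
    (hT : ∀ x, x ∈ T ↔ x ∈ S ∨ ∃ j : ℤ, x = c - k + j * n) (x : ℤ) :
    RunEnd n k T x ↔ RunEnd n k S x := by
  have hv' : ∀ j : ℤ, c + j * n - k ∉ S := fun j h => hv (by
    have := hS _ h (-j)
    rwa [show c + j * n - k + -j * n = c - k by ring] at this)
  have hST : ∀ y ∈ S, y ∈ T := fun y hy => (hT y).2 (Or.inl hy)
  constructor
  · rintro ⟨hx, z, hz, hxz, he⟩
    rcases (hT x).1 hx with hx | ⟨i, rfl⟩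
    · rcases (hT z).1 hz with hz | ⟨j, rfl⟩
      · exact ⟨hx, z, hz, hxz, fun y hy => he y (hST y hy)⟩
      · obtain ⟨hcS, w, hw, hcw, hf⟩ := hc.add_mul hS j
        have hvj := hv' j
        have hwc := RunEnd.witness_le hkn hk hw hf
        have hxc : x = c + j * n := by
          have := he _ (hST _ hcS)
          omega
        subst hxc
        exact ⟨hx, w, hw, hcw, hf⟩
    · exfalso
      obtain ⟨hcS, w, hw, hcw, hf⟩ := hc.add_mul hS (i - 1)
      have hvi := hv' i
      have hwc := RunEnd.witness_le hkn hk hw hf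
      have e : (i - 1) * n = i * n - n := by ring
      have hwn : w + n ∈ S := by simpa using hS w hw 1
      have h1 := he _ (hST _ hwn)
      have h2 : w + n ≠ c + i * n - k := fun h => hvi (h ▸ hwn)
      rcases (hT z).1 hz with hz | ⟨j, rfl⟩
      · have := hf z hz
        omega
      · have : i ≤ j := by
          by_contra h
          have : j + 1 ≤ i := by omega
          nlinarith
        have : i * n ≤ j * n := by nlinarith
        omega
  · rintro ⟨hx, z, hz, hxz, he⟩
    refine ⟨hST x hx, z, hST z hz, hxz, fun y hy => ?_⟩
    rcases (hT y).1 hy with hy | ⟨j, rfl⟩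
    · exact he y hy
    · by_contra! hcon
      obtain ⟨hcS, w, hw, hcw, hf⟩ := hc.add_mul hS (j - 1)
      have hvi := hv' j
      have hwc := RunEnd.witness_le hkn hk hw hf
      have e : (j - 1) * n = j * n - n := by ring
      have hwn : w + n ∈ S := by simpa using hS w hw 1
      have h1 := he _ hwn
      have h2 : w + n ≠ c + j * n - k := fun h => hvi (h ▸ hwn)
      have := hf z hz
      omega

/-- Removing the residue class of `c - k` from a clique `T` in which `c` ends a run and
`c - k` does not. -/
theorem RunEnd.of_remove (hk : 0 ≤ k) (hkn : 2 * k < n) (hTp : PeriodicSet n T)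
    (hC : CircClique n k T) {c : ℤ} (hc : RunEnd n k T c) (hv : ¬ RunEnd n k T (c - k))
    (hvT : c - k ∈ T)
    (hT : ∀ x, x ∈ S ↔ x ∈ T ∧ ∀ j : ℤ, x ≠ c - k + j * n) : RunEnd n k S c := by
  have hc0 := hc
  obtain ⟨hcT, z, hz, hcz, he⟩ := hc
  have hzc := RunEnd.witness_le hkn hk hz he
  have hcS : c ∈ S := (hT c).2 ⟨hcT, fun j hj => hv (by
    have := hc0.add_mul hTp (-j)
    rwa [show c + -j * n = c - k by linarith] at this)⟩
  have hS : ∀ y ∈ S, y ∈ T := fun y hy => ((hT y).1 hy).1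
  by_cases hzS : z ∈ S
  · exact ⟨hcS, z, hzS, hcz, fun y hy => he y (hS y hy)⟩
  have hzv : z = c - k := by
    have : ∃ j : ℤ, z = c - k + j * n := by
      by_contra! h
      exact hzS ((hT z).2 ⟨hz, h⟩)
    obtain ⟨j, rfl⟩ := this
    have : 0 ≤ j := by nlinarith
    have : j ≤ 0 := by nlinarith
    obtain rfl : j = 0 := by omega
    ring
  have hcn : c + n ∈ T := by simpa using hTp c hcT 1
  obtain ⟨w, ⟨hw, hcw⟩, hmin⟩ := Int.exists_least_of_bdd (P := fun y => y ∈ T ∧ c < y)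
    ⟨c, fun y hy => hy.2.le⟩ ⟨c + n, hcn, by omega⟩
  have hwn := hmin _ ⟨hcn, by omega⟩
  have hv2 : ¬ RunEnd n k T (c - k + n) := fun h => hv (by
    simpa using h.add_mul hTp (-1))
  have hvn : c - k + n ∈ T := by simpa using hTp _ hvT 1
  have hwz := he w hw
  have : ∃ y ∈ T, c - k + n < y ∧ y < w + n - k := by
    by_contra! h
    refine hv2 ⟨hvn, w, hw, by omega, fun y hy => ?_⟩
    have := h y hy
    omega
  obtain ⟨y, hy, hy1, hy2⟩ := this
  have hyw := hC y hy w hw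
  have hyn : y - n ∈ T := by simpa [sub_eq_add_neg] using hTp y hy (-1)
  refine ⟨hcS, y - n, (hT _).2 ⟨hyn, fun j hj => ?_⟩, by omega, fun u hu => ?_⟩
  · have : 0 < j := by nlinarith
    nlinarith
  · have := hmin u
    by_cases h : c < u
    · have := this ⟨hS u hu, h⟩
      omega
    · omega

/-- A clique whose set of run ends is stable under `c ↦ c - k` is a residue class modulo
`n - 2k`, and `n - 2k` divides `k`. -/
theorem RunEnd.mem_iff_dvd (hk : 0 ≤ k) (hkn : 2 * k < n) (hS : PeriodicSet n S)
    (hst : ∀ c, RunEnd n k S c → RunEnd n k S (c - k)) {c : ℤ} (hc : RunEnd n k S c) (x : ℤ) :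
    x ∈ S ↔ (n - 2 * k) ∣ x - c := by
  have step : ∀ c, RunEnd n k S c → RunEnd n k S (c + (n - 2 * k)) := fun c h => by
    have := (hst _ (hst _ h)).add_mul hS 1
    rwa [show c - k - k + 1 * n = c + (n - 2 * k) by ring] at this
  have stepN : ∀ (j : ℕ) c, RunEnd n k S c → RunEnd n k S (c + j * (n - 2 * k)) := by
    intro j
    induction j with
    | zero => intro c h; simpa using h
    | succ j ih =>
      intro c h
      have := step _ (ih c h)
      rwa [show c + j * (n - 2 * k) + (n - 2 * k) = c + (j + 1 : ℕ) * (n - 2 * k) by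
        push_cast; ring] at this
  have stepZ : ∀ (j : ℤ) c, RunEnd n k S c → RunEnd n k S (c + j * (n - 2 * k)) := by
    intro j c h
    have h1 := stepN (j + |j| * n).toNat c h
    have h0 : 0 ≤ j + |j| * n := by nlinarith [neg_abs_le j, abs_nonneg j]
    rw [Int.toNat_of_nonneg h0] at h1
    have := h1.add_mul hS (-(|j| * (n - 2 * k)))
    rwa [show c + (j + |j| * n) * (n - 2 * k) + -(|j| * (n - 2 * k)) * n
      = c + j * (n - 2 * k) by ring] at this
  constructor
  · intro hx
    have hm : 0 < n - 2 * k := by omega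
    obtain ⟨-, z, hz, hcz, he⟩ := stepZ ((x - c) / (n - 2 * k)) c hc
    have h1 := Int.emod_add_mul_ediv (x - c) (n - 2 * k)
    have h2 := Int.emod_nonneg (x - c) hm.ne'
    have h3 := Int.emod_lt_of_pos (x - c) hm
    rw [mul_comm (n - 2 * k)] at h1
    refine Int.dvd_of_emod_eq_zero ?_
    have := he x hx
    omega
  · rintro ⟨j, hj⟩
    have := (stepZ j c hc).1
    rwa [show c + j * (n - 2 * k) = x by linarith] at this

theorem runEnd_of_mem_iff_dvd (hd : (n - 2 * k) ∣ k) {c : ℤ}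
    (hS : ∀ x, x ∈ S ↔ (n - 2 * k) ∣ x - c) {x : ℤ} (hx : x ∈ S) : RunEnd n k S x := by
  refine ⟨hx, x - k, (hS _).2 ?_, by omega, fun y hy => ?_⟩
  · rw [show x - k - c = x - c - k by ring]
    exact dvd_sub ((hS x).1 hx) hd
  · have : (n - 2 * k) ∣ y - x := by
      have := dvd_sub ((hS y).1 hy) ((hS x).1 hx)
      rwa [show y - c - (x - c) = y - x by ring] at this
    by_contra! h
    have := Int.le_of_dvd (by omega) this
    omega

theorem circClique_of_mem_iff_dvd (hd : (n - 2 * k) ∣ k) {c : ℤ}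
    (hS : ∀ x, x ∈ S ↔ (n - 2 * k) ∣ x - c) : CircClique n k S := by
  intro x hx y hy
  have : (n - 2 * k) ∣ x - y - k := by
    have := dvd_sub ((hS x).1 hx) ((hS y).1 hy)
    rw [show x - c - (y - c) = x - y by ring] at this
    exact dvd_sub this hd
  by_contra! h
  have := Int.le_of_dvd (by omega) this
  omega

end Combinatorics

section EulerCharacteristic

variable {n : ℕ}

/-- The integers whose residue modulo `n` lies in `B`. -/
def residueLift (B : Finset (ZMod n)) : Set ℤ := {x | (x : ZMod n) ∈ B}

theorem mem_residueLift {B : Finset (ZMod n)} {x : ℤ} :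
    x ∈ residueLift B ↔ (x : ZMod n) ∈ B := Iff.rfl

theorem periodicSet_residueLift (B : Finset (ZMod n)) : PeriodicSet n (residueLift B) := by
  intro x hx j
  simpa [mem_residueLift] using hx

theorem intCast_eq_iff_exists_add_mul {x v : ℤ} :
    (x : ZMod n) = v ↔ ∃ j : ℤ, x = v + j * n := by
  rw [eq_comm, ZMod.intCast_eq_intCast_iff_dvd_sub]
  constructor
  · rintro ⟨j, hj⟩
    exact ⟨j, by linarith⟩
  · rintro ⟨j, rfl⟩
    exact ⟨j, by ring⟩

theorem exists_odd_eq_sub_two_mul_mul {n k : ℕ} (hkn : 2 * k < n) (hd : (n - 2 * k) ∣ k) :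
    ∃ r, Odd r ∧ n = (n - 2 * k) * r := by
  obtain ⟨q, hq⟩ := hd
  refine ⟨2 * q + 1, ⟨q, rfl⟩, ?_⟩
  calc n = (n - 2 * k) + 2 * k := by omega
    _ = (n - 2 * k) + 2 * ((n - 2 * k) * q) := by rw [← hq]
    _ = _ := by ring

/-- Insert `v` into `B`, or remove it if it is already there. -/
def toggle (v : ZMod n) (B : Finset (ZMod n)) : Finset (ZMod n) :=
  if v ∈ B then B.erase v else insert v B

theorem toggle_toggle (v : ZMod n) (B : Finset (ZMod n)) : toggle v (toggle v B) = B := by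
  by_cases h : v ∈ B <;> simp [toggle, h]

theorem toggle_ne (v : ZMod n) (B : Finset (ZMod n)) : toggle v B ≠ B := by
  intro h
  by_cases hv : v ∈ B
  · rw [toggle, if_pos hv] at h
    have := Finset.notMem_erase v B
    rw [h] at this
    exact this hv
  · rw [toggle, if_neg hv] at h
    have := Finset.mem_insert_self v B
    rw [h] at this
    exact hv this

theorem neg_one_pow_card_toggle {v : ZMod n} {B : Finset (ZMod n)} (hB : B.Nonempty)
    (hT : (toggle v B).Nonempty) :
    (-1 : ℝ) ^ (B.card - 1) + (-1) ^ ((toggle v B).card - 1) = 0 := by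
  have h1 := hB.card_pos
  have h2 := hT.card_pos
  by_cases hv : v ∈ B
  · have h3 := Finset.card_erase_of_mem hv
    rw [toggle, if_pos hv] at *
    rw [show B.card - 1 = ((B.erase v).card - 1) + 1 by omega, pow_succ]
    ring
  · have h3 := Finset.card_insert_of_notMem hv
    rw [toggle, if_neg hv] at *
    rw [show (insert v B).card - 1 = (B.card - 1) + 1 by omega, pow_succ]
    ring

/-- The residues modulo `n` congruent to `c` modulo `m`, for `m ∣ n`. -/
def residueCoset (n m : ℕ) (c : ℕ) : Finset (ZMod n) :=
  (Finset.range (n / m)).image fun j => ((c + m * j : ℕ) : ZMod n)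

theorem card_residueCoset {m c : ℕ} (hm : m ∣ n) (hc : c < m) :
    (residueCoset n m c).card = n / m := by
  rw [residueCoset, Finset.card_image_of_injOn, Finset.card_range]
  have key : ∀ j < n / m, c + m * j < n := by
    intro j hj
    have h1 : m * (n / m) = n := Nat.mul_div_cancel' hm
    have h2 : m * (j + 1) ≤ m * (n / m) := Nat.mul_le_mul_left m hj
    rw [h1] at h2
    linarith
  intro i hi j hj hij
  rw [Finset.coe_range, Set.mem_Iio] at hi hj
  have := (ZMod.natCast_eq_natCast_iff' _ _ _).1 hij
  rw [Nat.mod_eq_of_lt (key i hi), Nat.mod_eq_of_lt (key j hj)] at this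
  have hm0 : 0 < m := by omega
  exact Nat.eq_of_mul_eq_mul_left hm0 (by omega)

variable [NeZero n]

open Classical in
/-- The residues of the run ends of the lift of `B`. -/
noncomputable def runEnds (k : ℕ) (B : Finset (ZMod n)) : Finset (ZMod n) :=
  Finset.univ.filter fun c => ∃ x : ℤ, (x : ZMod n) = c ∧ RunEnd n k (residueLift B) x

theorem intCast_mem_runEnds {k : ℕ} {B : Finset (ZMod n)} {x : ℤ} :
    (x : ZMod n) ∈ runEnds k B ↔ RunEnd n k (residueLift B) x := by
  simp only [runEnds, Finset.mem_filter, Finset.mem_univ, true_and]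
  refine ⟨?_, fun h => ⟨x, rfl, h⟩⟩
  rintro ⟨y, hy, h⟩
  obtain ⟨j, rfl⟩ := intCast_eq_iff_exists_add_mul.1 hy.symm
  exact h.add_mul (periodicSet_residueLift B) j

theorem runEnds_subset (k : ℕ) (B : Finset (ZMod n)) : runEnds k B ⊆ B := by
  intro c hc
  obtain ⟨x, rfl⟩ := ZMod.intCast_surjective c
  exact (intCast_mem_runEnds.1 hc).1

theorem runEnds_nonempty {k : ℕ} {B : Finset (ZMod n)}
    (hC : CircClique n k (residueLift B)) (hB : B.Nonempty) : (runEnds k B).Nonempty := by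
  obtain ⟨b, hb⟩ := hB
  obtain ⟨x, rfl⟩ := ZMod.intCast_surjective b
  obtain ⟨c, hc⟩ := hC.exists_runEnd (Nat.cast_nonneg k) hb
  exact ⟨_, intCast_mem_runEnds.2 hc⟩

/-- The residues outside `L` that precede an element of `L` by `k`. -/
def openSlots (k : ℕ) (L : Finset (ZMod n)) : Finset (ZMod n) :=
  Finset.univ.filter fun v => v ∉ L ∧ v + k ∈ L

theorem circClique_toggle_and_runEnds_toggle {k : ℕ} (hkn : 2 * k < n) {B : Finset (ZMod n)}
    (hC : CircClique n k (residueLift B)) {v : ZMod n} (hv : v ∈ openSlots k (runEnds k B)) :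
    CircClique n k (residueLift (toggle v B)) ∧ runEnds k (toggle v B) = runEnds k B := by
  have hk : (0 : ℤ) ≤ k := Nat.cast_nonneg k
  have hkn' : 2 * (k : ℤ) < n := by exact_mod_cast hkn
  obtain ⟨u, rfl⟩ := ZMod.intCast_surjective v
  obtain ⟨hu, huk⟩ := (Finset.mem_filter.1 hv).2
  obtain ⟨c, rfl⟩ : ∃ c : ℤ, u = c - k := ⟨u + k, by ring⟩
  have hc : RunEnd n k (residueLift B) c := by
    rw [← intCast_mem_runEnds]
    simpa using huk
  rw [intCast_mem_runEnds] at hu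
  have adj : ∀ A : Finset (ZMod n), ∀ x, x ∈ residueLift (insert ((c - k : ℤ) : ZMod n) A) ↔
      x ∈ residueLift A ∨ ∃ j : ℤ, x = c - k + j * n := by
    intro A x
    rw [mem_residueLift, Finset.mem_insert, intCast_eq_iff_exists_add_mul, or_comm,
      mem_residueLift]
  by_cases hB : ((c - k : ℤ) : ZMod n) ∈ B
  · rw [toggle, if_pos hB]
    have hrem : ∀ x, x ∈ residueLift (B.erase ((c - k : ℤ) : ZMod n)) ↔
        x ∈ residueLift B ∧ ∀ j : ℤ, x ≠ c - k + j * n := by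
      intro x
      rw [mem_residueLift, Finset.mem_erase, Ne, intCast_eq_iff_exists_add_mul, and_comm,
        mem_residueLift, not_exists]
    refine ⟨fun x hx y hy => hC x ((hrem x).1 hx).1 y ((hrem y).1 hy).1, ?_⟩
    have h := RunEnd.of_remove hk hkn' (periodicSet_residueLift B) hC hc hu hB hrem
    have h2 := RunEnd.adjoin_iff hk hkn' (periodicSet_residueLift _) h
      (by simp [mem_residueLift]) (adj _)
    rw [Finset.insert_erase hB] at h2
    ext x
    obtain ⟨x, rfl⟩ := ZMod.intCast_surjective x
    rw [intCast_mem_runEnds, intCast_mem_runEnds, h2]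
  · rw [toggle, if_neg hB]
    refine ⟨hC.adjoin hk hkn' (periodicSet_residueLift B) hc (adj B), ?_⟩
    ext x
    obtain ⟨x, rfl⟩ := ZMod.intCast_surjective x
    rw [intCast_mem_runEnds, intCast_mem_runEnds,
      RunEnd.adjoin_iff hk hkn' (periodicSet_residueLift B) hc hB (adj B)]

theorem intCast_mem_residueCoset {m c : ℕ} (hm : m ∣ n) (x : ℤ) :
    (x : ZMod n) ∈ residueCoset n m c ↔ (m : ℤ) ∣ x - c := by
  obtain ⟨r, rfl⟩ := hm
  have hmr : m * r ≠ 0 := NeZero.ne _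
  have hm0 : 0 < m := Nat.pos_of_ne_zero fun h => hmr (by simp [h])
  have hr0 : 0 < r := Nat.pos_of_ne_zero fun h => hmr (by simp [h])
  rw [residueCoset, Nat.mul_div_cancel_left r hm0]
  simp only [Finset.mem_image, Finset.mem_range]
  constructor
  · rintro ⟨j, -, hj⟩
    rw [← Int.cast_natCast, ZMod.intCast_eq_intCast_iff_dvd_sub] at hj
    have h1 : (m : ℤ) ∣ x - ((c + m * j : ℕ) : ℤ) :=
      (Dvd.intro _ (by push_cast; rfl) : (m : ℤ) ∣ ((m * r : ℕ) : ℤ)).trans hj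
    have h2 := dvd_add h1 (Dvd.intro (j : ℤ) rfl)
    push_cast at h2
    rwa [show x - (c + m * j) + (m : ℤ) * j = x - c by ring] at h2
  · rintro ⟨q, hq⟩
    have hr : (r : ℤ) ≠ 0 := by exact_mod_cast hr0.ne'
    have h0 := Int.emod_nonneg q hr
    refine ⟨(q % r).toNat, ?_, ?_⟩
    · have := Int.emod_lt_of_pos q (by exact_mod_cast hr0 : (0 : ℤ) < r)
      omega
    · rw [← Int.cast_natCast, ZMod.intCast_eq_intCast_iff_dvd_sub]
      push_cast
      rw [Int.toNat_of_nonneg h0]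
      refine ⟨q / r, ?_⟩
      have := Int.emod_add_mul_ediv q r
      linear_combination hq - (m : ℤ) * this

open Classical in
/-- The nonempty cliques of the `k`-th power of the cycle of length `n`. -/
noncomputable def circCliques (n k : ℕ) [NeZero n] : Finset (Finset (ZMod n)) :=
  Finset.univ.filter fun B => B.Nonempty ∧ CircClique n k (residueLift B)

theorem mem_circCliques {k : ℕ} {B : Finset (ZMod n)} :
    B ∈ circCliques n k ↔ B.Nonempty ∧ CircClique n k (residueLift B) := by
  simp [circCliques]

theorem sum_circCliques_openSlots_nonempty {k : ℕ} (hkn : 2 * k < n) :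
    ∑ B ∈ (circCliques n k).filter (fun B => (openSlots k (runEnds k B)).Nonempty),
      (-1 : ℝ) ^ (B.card - 1) = 0 := by
  classical
  let pick : Finset (ZMod n) → ZMod n := fun F => if h : F.Nonempty then h.choose else 0
  have hpick : ∀ F, F.Nonempty → pick F ∈ F := fun F h => by
    simp only [pick, dif_pos h]
    exact h.choose_spec
  let v : Finset (ZMod n) → ZMod n := fun B => pick (openSlots k (runEnds k B))
  have key : ∀ B ∈ (circCliques n k).filter (fun B => (openSlots k (runEnds k B)).Nonempty),
      (toggle (v B) B).Nonempty ∧ CircClique n k (residueLift (toggle (v B) B)) ∧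
        runEnds k (toggle (v B) B) = runEnds k B := by
    intro B hB
    obtain ⟨hB, hF⟩ := Finset.mem_filter.1 hB
    obtain ⟨hne, hC⟩ := mem_circCliques.1 hB
    obtain ⟨h1, h2⟩ := circClique_toggle_and_runEnds_toggle hkn hC (hpick _ hF)
    refine ⟨?_, h1, h2⟩
    have := runEnds_nonempty hC hne
    rw [← h2] at this
    exact this.mono (runEnds_subset _ _)
  refine Finset.sum_involution (fun B _ => toggle (v B) B) ?_ ?_ ?_ ?_
  · intro B hB
    exact neg_one_pow_card_toggle (mem_circCliques.1 (Finset.mem_filter.1 hB).1).1 (key B hB).1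
  · intro B _ _
    exact toggle_ne _ _
  · intro B hB
    obtain ⟨h1, h2, h3⟩ := key B hB
    rw [Finset.mem_filter, mem_circCliques, h3]
    exact ⟨⟨h1, h2⟩, (Finset.mem_filter.1 hB).2⟩
  · intro B hB
    have h3 := (key B hB).2.2
    have : v (toggle (v B) B) = v B := by
      change pick (openSlots k (runEnds k (toggle (v B) B))) = _
      rw [h3]
    simp only [this, toggle_toggle]

theorem circCliques_openSlots_empty {k : ℕ} (hkn : 2 * k < n) {B : Finset (ZMod n)}
    (hB : B ∈ circCliques n k) (hF : ¬ (openSlots k (runEnds k B)).Nonempty) :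
    (n - 2 * k) ∣ k ∧ ∃ c < n - 2 * k, B = residueCoset n (n - 2 * k) c := by
  obtain ⟨hne, hC⟩ := mem_circCliques.1 hB
  have hk : (0 : ℤ) ≤ k := Nat.cast_nonneg k
  have hkn' : 2 * (k : ℤ) < n := by exact_mod_cast hkn
  have hm : ((n - 2 * k : ℕ) : ℤ) = n - 2 * k := by omega
  obtain ⟨b, hb⟩ := runEnds_nonempty hC hne
  obtain ⟨a, rfl⟩ := ZMod.intCast_surjective b
  have ha := intCast_mem_runEnds.1 hb
  have hst : ∀ c, RunEnd n k (residueLift B) c → RunEnd n k (residueLift B) (c - k) := by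
    intro c hc
    by_contra h
    refine hF ⟨((c - k : ℤ) : ZMod n), ?_⟩
    rw [openSlots, Finset.mem_filter, intCast_mem_runEnds]
    refine ⟨Finset.mem_univ _, h, ?_⟩
    rw [← intCast_mem_runEnds] at hc
    simpa using hc
  have hiff := RunEnd.mem_iff_dvd hk hkn' (periodicSet_residueLift B) hst ha
  rw [← hm] at hiff
  have hdk : (n - 2 * k) ∣ k := by
    have := (hiff (a - k)).1 (hst a ha).1
    rw [sub_sub_cancel_left, dvd_neg] at this
    exact_mod_cast this
  have hdn : (n - 2 * k) ∣ n :=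
    let ⟨r, _, hr⟩ := exists_odd_eq_sub_two_mul_mul hkn hdk
    ⟨r, hr⟩
  refine ⟨hdk, (a % (n - 2 * k : ℕ)).toNat, ?_, ?_⟩
  · have := Int.emod_lt_of_pos a (show (0 : ℤ) < (n - 2 * k : ℕ) by omega)
    omega
  · ext x
    obtain ⟨x, rfl⟩ := ZMod.intCast_surjective x
    rw [intCast_mem_residueCoset hdn, ← mem_residueLift, hiff,
      Int.toNat_of_nonneg (Int.emod_nonneg a (by omega))]
    have h := Int.emod_add_mul_ediv a (n - 2 * k : ℕ)
    rw [show x - a % (n - 2 * k : ℕ) = x - a + (n - 2 * k : ℕ) * (a / (n - 2 * k : ℕ)) by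
      linarith]
    exact (dvd_add_left (Dvd.intro _ rfl)).symm

theorem residueCoset_mem_circCliques {k c : ℕ} (hkn : 2 * k < n) (hd : (n - 2 * k) ∣ k) :
    residueCoset n (n - 2 * k) c ∈ circCliques n k ∧
      ¬ (openSlots k (runEnds k (residueCoset n (n - 2 * k) c))).Nonempty := by
  have hm : ((n - 2 * k : ℕ) : ℤ) = n - 2 * k := by omega
  have hdn : (n - 2 * k) ∣ n :=
    let ⟨r, _, hr⟩ := exists_odd_eq_sub_two_mul_mul hkn hd
    ⟨r, hr⟩
  have hd' : ((n : ℤ) - 2 * k) ∣ k := by rw [← hm]; exact_mod_cast hd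
  have hiff : ∀ x : ℤ, x ∈ residueLift (residueCoset n (n - 2 * k) c) ↔
      ((n : ℤ) - 2 * k) ∣ x - c := by
    intro x
    rw [← hm, mem_residueLift, intCast_mem_residueCoset hdn]
  refine ⟨mem_circCliques.2 ⟨⟨((c : ℤ) : ZMod n), ?_⟩, circClique_of_mem_iff_dvd hd' hiff⟩, ?_⟩
  · rw [intCast_mem_residueCoset hdn]
    simp
  · rintro ⟨v, hv⟩
    obtain ⟨x, rfl⟩ := ZMod.intCast_surjective v
    obtain ⟨h1, h2⟩ := (Finset.mem_filter.1 hv).2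
    rw [intCast_mem_runEnds] at h1
    refine h1 (runEnd_of_mem_iff_dvd hd' hiff ((hiff x).2 ?_))
    have h3 : ((x + k : ℤ) : ZMod n) ∈ residueCoset n (n - 2 * k) c := by
      have := runEnds_subset _ _ h2
      push_cast
      exact this
    have h4 := dvd_sub ((hiff _).1 h3) hd'
    rwa [show x + (k : ℤ) - c - k = x - c by ring] at h4

/-- The Euler characteristic of the clique complex of the `k`-th power of the cycle of
length `n`, when `2k < n`. -/
theorem sum_circCliques {k : ℕ} (hkn : 2 * k < n) :
    ∑ B ∈ circCliques n k, (-1 : ℝ) ^ (B.card - 1) =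
      if (n - 2 * k) ∣ k then ((n - 2 * k : ℕ) : ℝ) else 0 := by
  classical
  rw [← Finset.sum_filter_add_sum_filter_not _
    (fun B => (openSlots k (runEnds k B)).Nonempty), sum_circCliques_openSlots_nonempty hkn,
    zero_add]
  split_ifs with hd
  · obtain ⟨r, hodd, hr⟩ := exists_odd_eq_sub_two_mul_mul hkn hd
    have hdn : (n - 2 * k) ∣ n := ⟨r, hr⟩
    have himg : (circCliques n k).filter (fun B => ¬ (openSlots k (runEnds k B)).Nonempty) =
        (Finset.range (n - 2 * k)).image (residueCoset n (n - 2 * k)) := by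
      ext B
      rw [Finset.mem_filter, Finset.mem_image]
      constructor
      · rintro ⟨hB, hF⟩
        obtain ⟨-, c, hc, rfl⟩ := circCliques_openSlots_empty hkn hB hF
        exact ⟨c, Finset.mem_range.2 hc, rfl⟩
      · rintro ⟨c, -, rfl⟩
        exact residueCoset_mem_circCliques hkn hd
    rw [himg, Finset.sum_image]
    · rw [Finset.sum_congr rfl (g := fun _ => (1 : ℝ))]
      · simp
      · intro c hc
        rw [card_residueCoset hdn (Finset.mem_range.1 hc)]
        obtain ⟨q, rfl⟩ := hodd
        rw [Nat.div_eq_of_eq_mul_right (by omega) hr, Nat.add_sub_cancel, pow_mul]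
        simp
    · intro c hc d hd' h
      have hc' := Finset.mem_range.1 hc
      have hd2 := Finset.mem_range.1 hd'
      have h1 : ((c : ℤ) : ZMod n) ∈ residueCoset n (n - 2 * k) c := by
        rw [intCast_mem_residueCoset hdn]; simp
      rw [show residueCoset n (n - 2 * k) c = residueCoset n (n - 2 * k) d from h,
        intCast_mem_residueCoset hdn] at h1
      have := Int.eq_zero_of_abs_lt_dvd h1 (by rw [abs_lt]; omega)
      omega
  · rw [Finset.filter_false_of_mem, Finset.sum_empty]
    intro B hB h
    exact hd (circCliques_openSlots_empty hkn hB h).1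

end EulerCharacteristic

section Diameter

variable {n : ℕ} [NeZero n]

/-- The embedding of `ZMod n` in the plane as the vertices of a regular `n`-gon. -/
noncomputable def polygonVertex (x : ZMod n) : ℂ := ZMod.toCircle x

theorem polygonVertex_injective : Function.Injective (polygonVertex (n := n)) :=
  Subtype.val_injective.comp ZMod.injective_toCircle

theorem euclCycle_eq_image : euclCycle n = Finset.univ.image (polygonVertex (n := n)) := by
  have h : ∀ k : ℕ, Complex.exp (2 * (π : ℂ) * (k : ℂ) / (n : ℂ) * Complex.I) =
      polygonVertex (k : ZMod n) := fun k => by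
    rw [polygonVertex, ZMod.toCircle_natCast]
    congr 1
    ring
  ext z
  simp only [euclCycle, h, Finset.mem_image, Finset.mem_range, Finset.mem_univ, true_and]
  constructor
  · rintro ⟨k, -, rfl⟩
    exact ⟨_, rfl⟩
  · rintro ⟨x, rfl⟩
    exact ⟨x.val, ZMod.val_lt x, by rw [ZMod.natCast_zmod_val]⟩

theorem dist_polygonVertex (x y : ℤ) :
    dist (polygonVertex (x : ZMod n)) (polygonVertex (y : ZMod n)) =
      |2 * Real.sin (π * (x - y : ℤ) / n)| := by
  have h1 : polygonVertex (x : ZMod n) - polygonVertex (y : ZMod n) =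
      polygonVertex (y : ZMod n) * (polygonVertex ((x - y : ℤ) : ZMod n) - 1) := by
    rw [mul_sub, mul_one]
    congr 1
    rw [polygonVertex, polygonVertex, polygonVertex, ← Circle.coe_mul, ← AddChar.map_add_eq_mul]
    congr 2
    push_cast
    ring
  have h2 : polygonVertex ((x - y : ℤ) : ZMod n) =
      Complex.exp (Complex.I * ((2 * π * (x - y : ℤ) / n : ℝ) : ℂ)) := by
    rw [polygonVertex, ZMod.toCircle_intCast]
    congr 1
    push_cast
    ring
  rw [dist_eq_norm, h1, norm_mul, h2, Complex.norm_exp_I_mul_ofReal_sub_one, Real.norm_eq_abs,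
    polygonVertex, Circle.norm_coe, one_mul]
  congr 3
  ring

theorem CircClique.mono {n k l : ℤ} {S : Set ℤ} (hkl : k ≤ l) (h : CircClique n k S) :
    CircClique n l S := fun x hx y hy => by
  have := h x hx y hy
  omega

theorem sin_pi_mul_div_le {a b : ℝ} (ha : 0 ≤ a) (hab : a ≤ b) (hb : 2 * b ≤ n) :
    Real.sin (π * a / n) ≤ Real.sin (π * b / n) := by
  have hn : (0 : ℝ) < n := by exact_mod_cast Nat.pos_of_neZero n
  have hpi := Real.pi_pos
  apply Real.sin_le_sin_of_le_of_le_pi_div_two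
  · have : 0 ≤ π * a / n := by positivity
    linarith
  · rw [div_le_div_iff₀ hn two_pos]
    nlinarith
  · gcongr

theorem sin_pi_mul_sub_div (a : ℝ) : Real.sin (π * (n - a) / n) = Real.sin (π * a / n) := by
  have hn : (n : ℝ) ≠ 0 := by exact_mod_cast NeZero.ne n
  rw [mul_sub, sub_div, mul_div_cancel_right₀ _ hn, Real.sin_pi_sub]

theorem exists_diam_image_polygonVertex (B : Finset (ZMod n)) :
    ∃ K ≤ n / 2, (∀ k : ℕ, CircClique n k (residueLift B) ↔ K ≤ k) ∧
      Metric.diam (B.image polygonVertex : Set ℂ) = 2 * Real.sin (π * K / n) := by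
  classical
  have hn : (0 : ℝ) < n := by exact_mod_cast Nat.pos_of_neZero n
  have htop : CircClique n (n / 2 : ℕ) (residueLift B) := fun x _ y _ => by omega
  have hex : ∃ k : ℕ, CircClique n k (residueLift B) := ⟨_, htop⟩
  have hle : Nat.find hex ≤ n / 2 := Nat.find_min' hex htop
  have hK := Nat.find_spec hex
  have hmin : ∀ k : ℕ, CircClique n k (residueLift B) → Nat.find hex ≤ k :=
    fun k hk => Nat.find_min' hex hk
  generalize Nat.find hex = K at *
  have hK2 : 2 * (K : ℝ) ≤ n := by exact_mod_cast (by omega : 2 * K ≤ n)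
  have hsin : 0 ≤ Real.sin (π * K / n) := by
    simpa using sin_pi_mul_div_le (n := n) le_rfl (Nat.cast_nonneg (α := ℝ) K) hK2
  refine ⟨K, hle, fun k => ⟨hmin k, fun h => hK.mono (by exact_mod_cast h)⟩, le_antisymm ?_ ?_⟩
  · refine Metric.diam_le_of_forall_dist_le (by positivity) ?_
    simp only [Finset.coe_image, Set.forall_mem_image, Finset.mem_coe]
    intro a ha b hb
    obtain ⟨x, rfl⟩ := ZMod.intCast_surjective a
    obtain ⟨y, rfl⟩ := ZMod.intCast_surjective b
    have hn' : (n : ℤ) ≠ 0 := by exact_mod_cast NeZero.ne n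
    obtain ⟨d, hd0, hdn, j, hj⟩ : ∃ d : ℤ, 0 ≤ d ∧ d < n ∧ ∃ j : ℤ, x = y + d + j * n :=
      ⟨(x - y) % n, Int.emod_nonneg _ hn', Int.emod_lt_of_pos _ (by omega), (x - y) / n, by
        have := Int.emod_add_mul_ediv (x - y) n
        linarith⟩
    have hxd : (x : ZMod n) = ((y + d : ℤ) : ZMod n) := intCast_eq_iff_exists_add_mul.2 ⟨j, hj⟩
    rw [hxd] at ha ⊢
    have hd0' : (0 : ℝ) ≤ d := by exact_mod_cast hd0
    have hdn' : (d : ℝ) ≤ n := by exact_mod_cast hdn.le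
    rw [dist_polygonVertex, add_sub_cancel_left, abs_of_nonneg]
    · have h := hK (y + d) ha y hb
      rw [add_sub_cancel_left] at h
      gcongr 2 * ?_
      rcases h with h | h
      · exact sin_pi_mul_div_le hd0' (by exact_mod_cast h) hK2
      · have h' : (n : ℝ) - K ≤ d := by exact_mod_cast h
        rw [← sin_pi_mul_sub_div]
        exact sin_pi_mul_div_le (by linarith) (by linarith) hK2
    · have : 0 ≤ Real.sin (π * d / n) := by
        apply Real.sin_nonneg_of_nonneg_of_le_pi
        · have := Real.pi_pos
          positivity
        · rw [div_le_iff₀ hn]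
          exact mul_le_mul_of_nonneg_left hdn' Real.pi_pos.le
      positivity
  · rcases Nat.eq_zero_or_pos K with rfl | hpos
    · simpa using Metric.diam_nonneg
    · have hnot : ¬ CircClique n (K - 1 : ℕ) (residueLift B) := fun h => by
        have := hmin _ h
        omega
      simp only [CircClique, not_forall, not_or, not_le] at hnot
      obtain ⟨x, hx, y, hy, h1, h2⟩ := hnot
      have h1' : (K : ℝ) ≤ (x - y : ℤ) := by exact_mod_cast (by omega : (K : ℤ) ≤ x - y)
      have h2' : ((x - y : ℤ) : ℝ) ≤ n - K := by
        exact_mod_cast (by omega : (x - y : ℤ) ≤ n - K)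
      have hd : dist (polygonVertex (x : ZMod n)) (polygonVertex (y : ZMod n)) ≤
          Metric.diam (B.image polygonVertex : Set ℂ) :=
        Metric.dist_le_diam_of_mem (Finset.finite_toSet _).isBounded
          (Finset.mem_coe.2 (Finset.mem_image_of_mem _ hx))
          (Finset.mem_coe.2 (Finset.mem_image_of_mem _ hy))
      refine le_trans ?_ hd
      rw [dist_polygonVertex]
      refine le_trans ?_ (le_abs_self _)
      gcongr 2 * ?_
      have hK0 : (0 : ℝ) ≤ K := Nat.cast_nonneg K
      rcases le_total (2 * ((x - y : ℤ) : ℝ)) n with h | h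
      · exact sin_pi_mul_div_le hK0 h1' h
      · rw [← sin_pi_mul_sub_div ((x - y : ℤ) : ℝ)]
        exact sin_pi_mul_div_le hK0 (by linarith) (by linarith)

/-- The similarity between the `n`-gon's vertices that are `k` steps apart, at scale `t`. -/
noncomputable def chordSimilarity (n : ℕ) (t : ℝ) (k : ℕ) : ℝ :=
  Real.exp (-(2 * Real.sin (π * k / n)) * t)

theorem sum_range_ite_sub_succ (g : ℕ → ℝ) {K N : ℕ} (h : K ≤ N) :
    ∑ k ∈ Finset.range N, (if K ≤ k then g k - g (k + 1) else 0) = g K - g N := by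
  induction N, h using Nat.le_induction with
  | base =>
    rw [sub_self]
    exact Finset.sum_eq_zero fun k hk => if_neg (by simpa using hk)
  | succ N hN ih =>
    rw [Finset.sum_range_succ, ih, if_pos hN]
    ring

theorem sum_nonempty_neg_one_pow_card {α : Type*} [Fintype α] [Nonempty α] :
    ∑ B ∈ (Finset.univ : Finset (Finset α)).filter Finset.Nonempty,
      (-1 : ℝ) ^ (B.card - 1) = 1 := by
  classical
  have h0 : ∑ B : Finset α, (-1 : ℝ) ^ B.card = 0 := by
    have := Finset.sum_powerset_neg_one_pow_card_of_nonempty (Finset.univ_nonempty (α := α))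
    rw [Finset.powerset_univ] at this
    exact_mod_cast this
  rw [← Finset.sum_filter_add_sum_filter_not _ Finset.Nonempty] at h0
  have h1 : (Finset.univ : Finset (Finset α)).filter (fun B => ¬ B.Nonempty) = {∅} := by
    ext B
    simp
  rw [h1, Finset.sum_singleton, Finset.card_empty, pow_zero] at h0
  have h2 : ∑ B ∈ (Finset.univ : Finset (Finset α)).filter Finset.Nonempty,
      (-1 : ℝ) ^ (B.card - 1) = -∑ B ∈ (Finset.univ : Finset (Finset α)).filter Finset.Nonempty,
      (-1 : ℝ) ^ B.card := by
    rw [← Finset.sum_neg_distrib]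
    refine Finset.sum_congr rfl fun B hB => ?_
    have := (Finset.mem_filter.1 hB).2.card_pos
    obtain ⟨c, hc⟩ := Nat.exists_eq_succ_of_ne_zero this.ne'
    rw [hc, Nat.succ_sub_one, pow_succ]
    ring
  rw [h2]
  linarith

theorem ripsMag_image {α Y : Type*} [Fintype α] [DecidableEq Y] [MetricSpace Y] {f : α → Y}
    (hf : Function.Injective f) (t : ℝ) :
    ripsMag (Finset.univ.image f) t =
      ∑ B ∈ (Finset.univ : Finset (Finset α)).filter Finset.Nonempty,
        (-1 : ℝ) ^ (B.card - 1) * Real.exp (-(Metric.diam (B.image f : Set Y)) * t) := by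
  classical
  rw [ripsMag, Finset.powerset_image, Finset.powerset_univ, Finset.filter_image,
    Finset.sum_image fun A _ B _ h => Finset.image_injective hf h]
  simp only [Finset.image_nonempty, Finset.card_image_of_injective _ hf]

theorem ripsMag_euclCycle (t : ℝ) :
    ripsMag (euclCycle n) t = chordSimilarity n t (n / 2) +
      ∑ k ∈ Finset.range (n / 2), if (n - 2 * k) ∣ k then
        ((n - 2 * k : ℕ) : ℝ) * (chordSimilarity n t k - chordSimilarity n t (k + 1)) else 0 := by
  classical
  have hdecomp : ∀ B ∈ (Finset.univ : Finset (Finset (ZMod n))).filter Finset.Nonempty,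
      (-1 : ℝ) ^ (B.card - 1) *
        Real.exp (-(Metric.diam (B.image polygonVertex : Set ℂ)) * t) =
      (-1 : ℝ) ^ (B.card - 1) * chordSimilarity n t (n / 2) +
      ∑ k ∈ Finset.range (n / 2), if CircClique n k (residueLift B) then
        (-1 : ℝ) ^ (B.card - 1) * (chordSimilarity n t k - chordSimilarity n t (k + 1))
        else 0 := by
    intro B _
    obtain ⟨K, hKn, hK, hdiam⟩ := exists_diam_image_polygonVertex B
    have h := sum_range_ite_sub_succ (chordSimilarity n t) hKn
    simp only [hK, ← mul_ite_zero, ← Finset.mul_sum, h, hdiam]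
    rw [chordSimilarity, chordSimilarity]
    ring
  rw [euclCycle_eq_image, ripsMag_image polygonVertex_injective, Finset.sum_congr rfl hdecomp,
    Finset.sum_add_distrib, ← Finset.sum_mul, sum_nonempty_neg_one_pow_card, one_mul,
    Finset.sum_comm]
  congr 1
  refine Finset.sum_congr rfl fun k hk => ?_
  have hkn : 2 * k < n := by
    have := Finset.mem_range.1 hk
    omega
  have hχ := sum_circCliques hkn
  rw [← Finset.sum_filter, ← Finset.sum_mul, Finset.filter_filter]
  rw [circCliques] at hχ
  convert congrArg (· * (chordSimilarity n t k - chordSimilarity n t (k + 1))) hχ using 1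
  rw [ite_mul, zero_mul]

end Diameter

section Analysis

/-- The derivative of `x ↦ exp (-2t cos x)`. -/
noncomputable def cosKernelDeriv (t x : ℝ) : ℝ :=
  2 * t * Real.sin x * Real.exp (-2 * t * Real.cos x)

theorem hasDerivAt_exp_cos (t x : ℝ) :
    HasDerivAt (fun x => Real.exp (-2 * t * Real.cos x)) (cosKernelDeriv t x) x := by
  convert ((Real.hasDerivAt_cos x).const_mul (-2 * t)).exp using 1
  rw [cosKernelDeriv]
  ring

theorem cosKernelDeriv_mono {t a b : ℝ} (ht : 0 ≤ t) (ha : 0 ≤ a) (hab : a ≤ b)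
    (hb : b ≤ π / 2) : cosKernelDeriv t a ≤ cosKernelDeriv t b := by
  have hpi := Real.pi_pos
  have h1 : Real.sin a ≤ Real.sin b :=
    Real.sin_le_sin_of_le_of_le_pi_div_two (by linarith) hb hab
  have h2 : Real.cos b ≤ Real.cos a :=
    Real.cos_le_cos_of_nonneg_of_le_pi ha (by linarith) hab
  have h0 : 0 ≤ Real.sin a := Real.sin_nonneg_of_nonneg_of_le_pi ha (by linarith)
  have h3 : 0 ≤ Real.sin b := h0.trans h1
  rw [cosKernelDeriv, cosKernelDeriv]
  gcongr ?_ * Real.exp ?_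
  · gcongr
  · nlinarith

theorem exp_cos_sub_bounds {t a b : ℝ} (ht : 0 ≤ t) (ha : 0 ≤ a) (hab : a ≤ b)
    (hb : b ≤ π / 2) :
    (b - a) * cosKernelDeriv t a ≤
        Real.exp (-2 * t * Real.cos b) - Real.exp (-2 * t * Real.cos a) ∧
      Real.exp (-2 * t * Real.cos b) - Real.exp (-2 * t * Real.cos a) ≤
        (b - a) * cosKernelDeriv t b := by
  rcases hab.eq_or_lt with rfl | hlt
  · simp
  obtain ⟨c, ⟨hac, hcb⟩, hc⟩ := exists_hasDerivAt_eq_slope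
    (fun x => Real.exp (-2 * t * Real.cos x)) (cosKernelDeriv t) hlt
    (by fun_prop) (fun x _ => hasDerivAt_exp_cos t x)
  have hba : 0 < b - a := sub_pos.2 hlt
  rw [eq_div_iff hba.ne', mul_comm] at hc
  rw [← hc]
  exact ⟨mul_le_mul_of_nonneg_left
      (cosKernelDeriv_mono ht ha hac.le (hcb.le.trans hb)) hba.le,
    mul_le_mul_of_nonneg_left
      (cosKernelDeriv_mono ht (ha.trans hac.le) hcb.le hb) hba.le⟩

theorem chordSimilarity_eq {n : ℕ} (hn : 0 < n) (t : ℝ) (k : ℕ) :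
    chordSimilarity n t k =
      Real.exp (-2 * t * Real.cos (π * (n - 2 * k) / (2 * n))) := by
  have hn' : (n : ℝ) ≠ 0 := by exact_mod_cast hn.ne'
  have : π * ((n : ℝ) - 2 * k) / (2 * n) = π / 2 - π * k / n := by
    field_simp
  rw [chordSimilarity, this, Real.cos_pi_div_two_sub]
  congr 1
  ring

theorem chordSimilarity_sub_succ_bounds {n k : ℕ} {t : ℝ} (ht : 0 ≤ t) (hk : 2 * (k + 1) ≤ n) :
    π / n * cosKernelDeriv t (π * (n - 2 * k) / (2 * n) - π / n) ≤
        chordSimilarity n t k - chordSimilarity n t (k + 1) ∧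
      chordSimilarity n t k - chordSimilarity n t (k + 1) ≤
        π / n * cosKernelDeriv t (π * (n - 2 * k) / (2 * n)) := by
  have hn : 0 < n := by omega
  have hn' : (0 : ℝ) < n := by exact_mod_cast hn
  have hpi := Real.pi_pos
  have hk' : 2 * ((k : ℝ) + 1) ≤ n := by exact_mod_cast hk
  have hsucc : π * ((n : ℝ) - 2 * (k + 1 : ℕ)) / (2 * n) =
      π * (n - 2 * k) / (2 * n) - π / n := by
    push_cast
    field_simp
    ring
  rw [chordSimilarity_eq hn, chordSimilarity_eq hn, hsucc]
  have h0 : 0 ≤ π * ((n : ℝ) - 2 * k) / (2 * n) - π / n := by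
    rw [← hsucc]
    push_cast
    exact div_nonneg (mul_nonneg hpi.le (by linarith)) (by linarith)
  have h1 : π * ((n : ℝ) - 2 * k) / (2 * n) ≤ π / 2 := by
    rw [div_le_div_iff₀ (by linarith) two_pos]
    have : (0 : ℝ) ≤ k := Nat.cast_nonneg k
    nlinarith
  have h2 : 0 ≤ π / (n : ℝ) := by positivity
  simpa using exp_cos_sub_bounds ht h0 (sub_le_self _ h2) h1

theorem euclSeriesTerm_eq (t : ℝ) (r : ℕ) :
    2 * π * t * euclSeriesTerm t r = π / r * cosKernelDeriv t (π / (2 * r)) := by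
  rw [euclSeriesTerm, cosKernelDeriv]
  ring

theorem euclSeriesTerm_nonneg (t : ℝ) (r : ℕ) : 0 ≤ euclSeriesTerm t r := by
  rcases Nat.eq_zero_or_pos r with rfl | hr
  · simp [euclSeriesTerm]
  have hr' : (1 : ℝ) ≤ r := by exact_mod_cast hr
  have hpi := Real.pi_pos
  have : 0 ≤ Real.sin (π / (2 * r)) := by
    apply Real.sin_nonneg_of_nonneg_of_le_pi (by positivity)
    exact div_le_self hpi.le (by linarith)
  rw [euclSeriesTerm]
  positivity

theorem summable_euclSeriesTerm_odd {t : ℝ} (ht : 0 ≤ t) :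
    Summable fun r : ℕ => if Odd r then euclSeriesTerm t r else 0 := by
  refine Summable.of_nonneg_of_le (fun r => ?_) (fun r => ?_)
    ((Real.summable_one_div_nat_pow.2 one_lt_two).mul_left (π / 2))
  · split_ifs
    exacts [euclSeriesTerm_nonneg t r, le_rfl]
  · have hpi := Real.pi_pos
    split_ifs with h
    · have hr' : (1 : ℝ) ≤ r := by exact_mod_cast h.pos
      have hle : π / (2 * r) ≤ π / 2 :=
        div_le_div_of_nonneg_left hpi.le two_pos (by linarith)
      have h0 : 0 ≤ π / (2 * r) := by positivity
      have hcos : 0 ≤ Real.cos (π / (2 * r)) :=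
        Real.cos_nonneg_of_neg_pi_div_two_le_of_le (by linarith) hle
      have hexp : Real.exp (-2 * t * Real.cos (π / (2 * r))) ≤ 1 := by
        rw [Real.exp_le_one_iff]
        nlinarith [mul_nonneg ht hcos]
      have hsin := Real.sin_le h0
      have hsin0 : 0 ≤ Real.sin (π / (2 * r)) :=
        Real.sin_nonneg_of_nonneg_of_le_pi h0 (by linarith)
      calc euclSeriesTerm t r ≤ 1 / r * 1 * (π / (2 * r)) := by
            rw [euclSeriesTerm]
            gcongr
        _ = π / 2 * (1 / (r : ℝ) ^ 2) := by
            field_simp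
    · positivity

end Analysis

section Supremum

theorem mul_cosKernelDeriv_eq {n m r : ℕ} (hn : 0 < n) (h : n = m * r) (t : ℝ) :
    m * (π / n * cosKernelDeriv t (π * m / (2 * n))) = 2 * π * t * euclSeriesTerm t r := by
  subst h
  have hm : (m : ℝ) ≠ 0 := fun h => by simp_all
  have hr : (r : ℝ) ≠ 0 := fun h => by simp_all
  rw [euclSeriesTerm_eq, show π * m / (2 * (m * r : ℕ)) = π / (2 * r) by
    push_cast; field_simp]
  push_cast
  field_simp

theorem ripsMag_euclCycle_le_sum {n : ℕ} (hn : 0 < n) {t : ℝ} (ht : 0 ≤ t) :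
    ripsMag (euclCycle n) t ≤ Real.exp (-2 * t) +
      ∑ k ∈ Finset.range ((n + 1) / 2), if (n - 2 * k) ∣ k then
        2 * π * t * euclSeriesTerm t (n / (n - 2 * k)) else 0 := by
  have : NeZero n := ⟨hn.ne'⟩
  have hsum : ∑ k ∈ Finset.range (n / 2), (if (n - 2 * k) ∣ k then
        ((n - 2 * k : ℕ) : ℝ) * (chordSimilarity n t k - chordSimilarity n t (k + 1)) else 0) ≤
      ∑ k ∈ Finset.range (n / 2), if (n - 2 * k) ∣ k then
        2 * π * t * euclSeriesTerm t (n / (n - 2 * k)) else 0 := by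
    refine Finset.sum_le_sum fun k hk => ?_
    split_ifs with hd
    · have hk' : 2 * (k + 1) ≤ n := by
        have := Finset.mem_range.1 hk
        omega
      obtain ⟨r, -, hr⟩ := exists_odd_eq_sub_two_mul_mul (by omega) hd
      have hr' : n / (n - 2 * k) = r := Nat.div_eq_of_eq_mul_right (by omega) hr
      rw [hr', ← mul_cosKernelDeriv_eq hn hr]
      gcongr
      rw [show ((n - 2 * k : ℕ) : ℝ) = n - 2 * k by
        rw [Nat.cast_sub (by omega)]; push_cast; ring]
      exact (chordSimilarity_sub_succ_bounds ht hk').2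
    · exact le_rfl
  rw [ripsMag_euclCycle, chordSimilarity_eq hn]
  rcases Nat.even_or_odd' n with ⟨m, hm | hm⟩
  · have h1 : (n + 1) / 2 = n / 2 := by omega
    have h2 : (n : ℝ) - 2 * (n / 2 : ℕ) = 0 := by
      rw [sub_eq_zero]
      exact_mod_cast (by omega : n = 2 * (n / 2))
    rw [h1, h2, mul_zero, zero_div, Real.cos_zero, mul_one]
    gcongr
  · have h1 : (n + 1) / 2 = n / 2 + 1 := by omega
    have h2 : (n : ℝ) - 2 * (n / 2 : ℕ) = 1 := by
      rw [sub_eq_iff_eq_add]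
      exact_mod_cast (by omega : n = 1 + 2 * (n / 2))
    have h3 : n - 2 * (n / 2) = 1 := by omega
    rw [h1, h2, Finset.sum_range_succ, h3, if_pos (one_dvd _), Nat.div_one, mul_one]
    have hpi := Real.pi_pos
    have hone : (1 : ℝ) ≤ n := by exact_mod_cast hn
    have h0 : 0 ≤ π / (2 * (n : ℝ)) := by positivity
    have hb := (exp_cos_sub_bounds ht le_rfl h0
      (div_le_div_of_nonneg_left hpi.le two_pos (by linarith))).2
    rw [Real.cos_zero, mul_one, sub_zero] at hb
    have hterm := euclSeriesTerm_eq t n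
    have hnonneg : 0 ≤ 2 * π * t * euclSeriesTerm t n :=
      mul_nonneg (by positivity) (euclSeriesTerm_nonneg t n)
    have hhalf : π / (2 * (n : ℝ)) * cosKernelDeriv t (π / (2 * n)) =
        (2 * π * t * euclSeriesTerm t n) / 2 := by
      rw [hterm]
      ring
    linarith

theorem ripsMag_euclCycle_le {n : ℕ} (hn : 0 < n) {t : ℝ} (ht : 0 ≤ t) :
    ripsMag (euclCycle n) t ≤ Real.exp (-2 * t) + 2 * π * t *
      ∑' r : ℕ, (if Odd r then euclSeriesTerm t r else 0) := by
  refine (ripsMag_euclCycle_le_sum hn ht).trans ?_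
  rw [← Finset.sum_filter, ← Finset.mul_sum]
  have hpi := Real.pi_pos
  gcongr
  have key : ∀ k ∈ (Finset.range ((n + 1) / 2)).filter (fun k => (n - 2 * k) ∣ k),
      2 * k < n ∧ Odd (n / (n - 2 * k)) ∧ n = (n - 2 * k) * (n / (n - 2 * k)) := by
    intro k hk
    obtain ⟨hk, hd⟩ := Finset.mem_filter.1 hk
    have hkn : 2 * k < n := by
      have := Finset.mem_range.1 hk
      omega
    obtain ⟨r, hodd, hr⟩ := exists_odd_eq_sub_two_mul_mul hkn hd
    rw [Nat.div_eq_of_eq_mul_right (by omega) hr]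
    exact ⟨hkn, hodd, hr⟩
  have hinj : Set.InjOn (fun k => n / (n - 2 * k))
      ((Finset.range ((n + 1) / 2)).filter (fun k => (n - 2 * k) ∣ k)) := by
    intro i hi j hj hij
    obtain ⟨hi1, hi2, hi3⟩ := key i hi
    obtain ⟨hj1, -, hj3⟩ := key j hj
    rw [show n / (n - 2 * i) = n / (n - 2 * j) from hij] at hi3 hi2
    have := Nat.eq_of_mul_eq_mul_right hi2.pos (hi3.symm.trans hj3)
    omega
  calc ∑ k ∈ (Finset.range ((n + 1) / 2)).filter (fun k => (n - 2 * k) ∣ k),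
        euclSeriesTerm t (n / (n - 2 * k))
      = ∑ k ∈ (Finset.range ((n + 1) / 2)).filter (fun k => (n - 2 * k) ∣ k),
        (fun r => if Odd r then euclSeriesTerm t r else 0) (n / (n - 2 * k)) :=
        Finset.sum_congr rfl fun k hk => (if_pos (key k hk).2.1).symm
    _ = ∑ r ∈ ((Finset.range ((n + 1) / 2)).filter (fun k => (n - 2 * k) ∣ k)).image
          (fun k => n / (n - 2 * k)), if Odd r then euclSeriesTerm t r else 0 :=
        by rw [Finset.sum_image hinj]
    _ ≤ _ := (summable_euclSeriesTerm_odd ht).sum_le_tsum _ fun r _ => by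
        split_ifs
        exacts [euclSeriesTerm_nonneg t r, le_rfl]

theorem le_ripsMag_euclCycle {N : ℕ} (hN : 0 < N) {t : ℝ} (ht : 0 ≤ t) (s : Finset ℕ)
    (hs : ∀ r ∈ s, Odd r ∧ r ∣ N) :
    Real.exp (-2 * t) +
        ∑ r ∈ s, π / r * cosKernelDeriv t (π / (2 * r) - π / (2 * N : ℕ)) ≤
      ripsMag (euclCycle (2 * N)) t := by
  have : NeZero (2 * N) := ⟨by omega⟩
  rw [ripsMag_euclCycle, chordSimilarity_eq (by omega), Nat.mul_div_cancel_left N two_pos,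
    ← Finset.sum_filter]
  have hmid : ((2 * N : ℕ) : ℝ) - 2 * N = 0 := by
    push_cast
    ring
  rw [hmid, mul_zero, zero_div, Real.cos_zero, mul_one]
  gcongr
  have key : ∀ r ∈ s, ∃ q, r = 2 * q + 1 ∧ N / r * r = N ∧ 0 < N / r ∧
      N - N / r = 2 * (N / r) * q := by
    intro r hr
    obtain ⟨⟨q, hq⟩, hdvd⟩ := hs r hr
    have hmul := Nat.div_mul_cancel hdvd
    refine ⟨q, hq, hmul, Nat.div_pos (Nat.le_of_dvd hN hdvd) (by omega), ?_⟩
    have : N = N / r + 2 * (N / r) * q := by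
      conv_lhs => rw [← hmul]
      conv_lhs => rw [mul_comm, hq, ← hq]
      rw [hq]
      ring
    omega
  have hinj : Set.InjOn (fun r => N - N / r) s := by
    intro a ha b hb hab
    obtain ⟨-, -, ha1, ha2, -⟩ := key a ha
    obtain ⟨-, -, hb1, hb2, -⟩ := key b hb
    have hab' : N - N / a = N - N / b := hab
    have h1 := Nat.div_le_self N a
    have h3 := Nat.div_le_self N b
    have h4 : N / a = N / b := by omega
    rw [h4] at ha1
    exact Nat.eq_of_mul_eq_mul_left hb2 (ha1.trans hb1.symm)
  have hsub : s.image (fun r => N - N / r) ⊆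
      (Finset.range N).filter (fun k => (2 * N - 2 * k) ∣ k) := by
    intro k hk
    obtain ⟨r, hr, rfl⟩ := Finset.mem_image.1 hk
    obtain ⟨q, -, -, h2, h3⟩ := key r hr
    have h1 := Nat.div_le_self N r
    rw [Finset.mem_filter, Finset.mem_range]
    refine ⟨by omega, q, ?_⟩
    rw [h3, ← h3, show 2 * N - 2 * (N - N / r) = 2 * (N / r) by omega, h3]
  calc ∑ r ∈ s, π / r * cosKernelDeriv t (π / (2 * r) - π / (2 * N : ℕ))
      ≤ ∑ r ∈ s, ((2 * N - 2 * (N - N / r) : ℕ) : ℝ) *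
          (chordSimilarity (2 * N) t (N - N / r) -
            chordSimilarity (2 * N) t (N - N / r + 1)) := by
        refine Finset.sum_le_sum fun r hr => ?_
        obtain ⟨q, hq, h1, h2, -⟩ := key r hr
        have h3 := Nat.div_le_self N r
        have hb := (chordSimilarity_sub_succ_bounds (n := 2 * N) (k := N - N / r) ht
          (by omega)).1
        generalize N / r = m at *
        subst h1
        have hr0 : (r : ℝ) ≠ 0 := by exact_mod_cast (by omega : r ≠ 0)
        have hm0 : (m : ℝ) ≠ 0 := by exact_mod_cast h2.ne'
        have e1 : ((2 * (m * r) - 2 * (m * r - m) : ℕ) : ℝ) = 2 * m := by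
          exact_mod_cast (by omega : 2 * (m * r) - 2 * (m * r - m) = 2 * m)
        have e2 : π * (((2 * (m * r) : ℕ) : ℝ) - 2 * (m * r - m : ℕ)) /
            (2 * (2 * (m * r) : ℕ)) = π / (2 * r) := by
          rw [Nat.cast_sub h3]
          push_cast
          field_simp
          ring
        rw [e2] at hb
        rw [e1]
        refine le_trans (le_of_eq ?_) (mul_le_mul_of_nonneg_left hb (by positivity))
        rw [← mul_assoc (2 * (m : ℝ))]
        congr 1
        push_cast
        field_simp
    _ = ∑ k ∈ s.image (fun r => N - N / r), ((2 * N - 2 * k : ℕ) : ℝ) *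
          (chordSimilarity (2 * N) t k - chordSimilarity (2 * N) t (k + 1)) :=
        by rw [Finset.sum_image hinj]
    _ ≤ _ := by
        refine Finset.sum_le_sum_of_subset_of_nonneg hsub fun k hk _ => ?_
        have hk := Finset.mem_range.1 (Finset.mem_filter.1 hk).1
        have hs' : Real.sin (π * k / (2 * N : ℕ)) ≤
            Real.sin (π * (k + 1 : ℕ) / (2 * N : ℕ)) := by
          apply sin_pi_mul_div_le (Nat.cast_nonneg k)
          · exact_mod_cast k.le_succ
          · exact_mod_cast (by omega : 2 * (k + 1) ≤ 2 * N)
        refine mul_nonneg (Nat.cast_nonneg _) (sub_nonneg.2 ?_)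
        rw [chordSimilarity, chordSimilarity, Real.exp_le_exp]
        nlinarith

theorem sum_range_le_of_ripsMag_le {t b : ℝ} (ht : 0 ≤ t)
    (hb : ∀ n, 1 ≤ n → ripsMag (euclCycle n) t ≤ b) (R : ℕ) :
    Real.exp (-2 * t) + 2 * π * t *
      ∑ r ∈ Finset.range R, (if Odd r then euclSeriesTerm t r else 0) ≤ b := by
  have hlim : Filter.Tendsto (fun M : ℕ => Real.exp (-2 * t) +
      ∑ r ∈ (Finset.range R).filter Odd, π / r *
        cosKernelDeriv t (π / (2 * r) - π / (2 * (R.factorial * (M + 1)) : ℕ)))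
      Filter.atTop (nhds (Real.exp (-2 * t) +
        ∑ r ∈ (Finset.range R).filter Odd, π / r * cosKernelDeriv t (π / (2 * r) - 0))) := by
    have hcont : Continuous (cosKernelDeriv t) := by
      unfold cosKernelDeriv
      fun_prop
    have hN : Filter.Tendsto (fun M : ℕ => 2 * (R.factorial * (M + 1)))
        Filter.atTop Filter.atTop := by
      refine Filter.tendsto_atTop_mono (fun M => ?_) Filter.tendsto_id
      have := R.factorial_pos
      simp only [id]
      nlinarith
    have h0 := (tendsto_const_div_atTop_nhds_zero_nat π).comp hN
    refine tendsto_const_nhds.add (tendsto_finsetSum _ fun r _ => tendsto_const_nhds.mul ?_)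
    exact (hcont.tendsto _).comp (tendsto_const_nhds.sub h0)
  rw [← Finset.sum_filter, Finset.mul_sum, Finset.sum_congr rfl fun r _ => euclSeriesTerm_eq t r]
  simp only [sub_zero] at hlim
  refine le_of_tendsto' hlim fun M => ?_
  have hpos : 0 < R.factorial * (M + 1) := Nat.mul_pos R.factorial_pos M.succ_pos
  refine (le_ripsMag_euclCycle hpos ht _ fun r hr => ?_).trans (hb _ (by omega))
  obtain ⟨hr, hodd⟩ := Finset.mem_filter.1 hr
  exact ⟨hodd, (Nat.dvd_factorial hodd.pos (Finset.mem_range.1 hr).le).mul_right _⟩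

end Supremum


/-- for every `t > 0`,
`sup_{n ≥ 1} |tC_n^eucl|_Rips = e^{−2t} + 2πt Σ_{r odd} (1/r) e^{−2t cos(π/(2r))} sin(π/(2r))`. -/
theorem ripsMag_euclCycle_sup (t : ℝ) (ht : 0 < t) :
    IsLUB {x : ℝ | ∃ n : ℕ, 1 ≤ n ∧ x = ripsMag (euclCycle n) t}
      (Real.exp (-2 * t) + 2 * π * t *
        ∑' r : ℕ, (if Odd r then euclSeriesTerm t r else 0)) := by
  have hpi := Real.pi_pos
  constructor
  · rintro _ ⟨n, hn, rfl⟩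
    exact ripsMag_euclCycle_le hn ht.le
  · intro b hb
    have hb' : ∀ n, 1 ≤ n → ripsMag (euclCycle n) t ≤ b := fun n hn => hb ⟨n, hn, rfl⟩
    have hpos : 0 < 2 * π * t := by positivity
    have htsum : ∑' r : ℕ, (if Odd r then euclSeriesTerm t r else 0) ≤
        (b - Real.exp (-2 * t)) / (2 * π * t) := by
      refine Real.tsum_le_of_sum_range_le (fun r => ?_) fun R => ?_
      · split_ifs
        exacts [euclSeriesTerm_nonneg t r, le_rfl]
      · rw [le_div_iff₀' hpos]
        linarith [sum_range_le_of_ripsMag_le ht.le hb' R]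
    rw [le_div_iff₀' hpos] at htsum
    linarith
end

section
/- For every t > 0, the sequence n ↦ |tC_n^geo|_Rips is unbounded above; equivalently, its upper limit satisfies limsup_{n→∞} |tC_n^geo|_Rips = +∞. -/
open scoped BigOperators Real

open scoped Classical in
/-- The geodesic cycle `C_n^geo`: `n` equally spaced points on the circle
`ℝ/2πℤ` of total arclength `2π`, with the geodesic metric
`d(i,j) = (2π/n)·min(|i−j|, n−|i−j|)`. -/
noncomputable def geoCycle (n : ℕ) : Finset (AddCircle (2 * π : ℝ)) :=
  (Finset.range n).image (fun k => ((2 * π * k / n : ℝ) : AddCircle (2 * π : ℝ)))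
/-- The distance from `x` to `0` in the cycle graph on `ZMod n`. -/
def cycNorm {n : ℕ} (x : ZMod n) : ℕ := min x.val (n - x.val)

/-- All pairwise cyclic distances in `A` are at most `r`, i.e. `A` is a simplex of the
Vietoris–Rips complex at scale `r`. -/
def IsRipsSimplex {n : ℕ} (r : ℕ) (A : Finset (ZMod n)) : Prop :=
  ∀ a ∈ A, ∀ b ∈ A, cycNorm (b - a) ≤ r

instance {n : ℕ} (r : ℕ) : DecidablePred (IsRipsSimplex (n := n) r) :=
  fun A => inferInstanceAs (Decidable (∀ a ∈ A, ∀ b ∈ A, cycNorm (b - a) ≤ r))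

lemma cycNorm_zero {n : ℕ} : cycNorm (0 : ZMod n) = 0 := by
  simp [cycNorm]

lemma cycNorm_neg {n : ℕ} [NeZero n] (x : ZMod n) : cycNorm (-x) = cycNorm x := by
  have := ZMod.val_lt x
  unfold cycNorm
  rw [ZMod.neg_val]
  split_ifs with h
  · simp [h]
  · omega

lemma cycNorm_sub_comm {n : ℕ} [NeZero n] (x y : ZMod n) :
    cycNorm (x - y) = cycNorm (y - x) := by
  rw [← cycNorm_neg, neg_sub]

lemma IsRipsSimplex.mono {n r : ℕ} {A B : Finset (ZMod n)} (hB : IsRipsSimplex r B)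
    (h : A ⊆ B) : IsRipsSimplex r A :=
  fun a ha b hb => hB a (h ha) b (h hb)

lemma IsRipsSimplex.insert {n r : ℕ} [NeZero n] {A : Finset (ZMod n)} {x : ZMod n}
    (hA : IsRipsSimplex r A) (hx : ∀ b ∈ A, cycNorm (b - x) ≤ r) :
    IsRipsSimplex r (insert x A) := by
  intro a ha b hb
  rw [Finset.mem_insert] at ha hb
  rcases ha with rfl | ha <;> rcases hb with rfl | hb
  · simp [cycNorm_zero]
  · exact hx b hb
  · rw [cycNorm_sub_comm]; exact hx a ha
  · exact hA a ha b hb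

/-- The only point at distance at most `r` from `0` but more than `r` from `1` is `-r`. -/
lemma eq_neg_of_lt_cycNorm_sub_one {n r : ℕ} [NeZero n] {y : ZMod n}
    (hy : cycNorm y ≤ r) (hy' : r < cycNorm (y - 1)) : y = -(r : ZMod n) := by
  set v := (y - 1).val with hv
  have hyv : y = ((v + 1 : ℕ) : ZMod n) := by
    rw [hv]; push_cast; rw [ZMod.natCast_zmod_val]; ring
  have hlt : r < v ∧ r < n - v := by
    unfold cycNorm at hy'; rw [← hv] at hy'; omega
  by_cases h : v + 1 < n - r
  · exfalso
    have : y.val = v + 1 := by rw [hyv]; exact ZMod.val_cast_of_lt (by omega)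
    unfold cycNorm at hy; omega
  · have : v + 1 = n - r := by omega
    rw [hyv, this, Nat.cast_sub (by omega)]; simp

lemma IsRipsSimplex.add_one_add_notMem {n r : ℕ} [NeZero n] (hr : 2 * r < n)
    {A : Finset (ZMod n)} (hA : IsRipsSimplex r A) {a : ZMod n} (ha : a ∈ A)
    (ha' : a - r ∉ A) : a + 1 + r ∉ A := by
  intro hmem
  by_cases h : 2 * r + 2 ≤ n
  · have := hA a ha _ hmem
    have e : a + 1 + r - a = ((r + 1 : ℕ) : ZMod n) := by push_cast; ring
    rw [e, cycNorm, ZMod.val_cast_of_lt (by omega)] at this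
    omega
  · have e : ((2 * r + 1 : ℕ) : ZMod n) = 0 := by
      rw [show 2 * r + 1 = n by omega]; simp
    apply ha'
    convert hmem using 1
    push_cast at e
    linear_combination -e

/-- Sign-reversing involution: toggle `a + 1` where `a ∈ P`, `a + 1 ∉ P`. -/
lemma sum_neg_one_pow_card_eq_zero {n r : ℕ} [NeZero n] (hr : 2 * r < n)
    (P : Finset (ZMod n)) (hP : P.Nonempty) (hP' : P ≠ Finset.univ) :
    ∑ A : Finset (ZMod n) with IsRipsSimplex r A ∧ ∀ p ∈ P, p ∈ A ∧ p - r ∉ A,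
      (-1 : ℤ) ^ A.card = 0 := by
  obtain ⟨a, haP, hxP⟩ : ∃ a ∈ P, a + 1 ∉ P := by
    by_contra! h
    obtain ⟨p, hp⟩ := hP
    have key : ∀ k : ℕ, p + k ∈ P := by
      intro k
      induction k with
      | zero => simpa using hp
      | succ k ih => push_cast; rw [← add_assoc]; exact h _ ih
    apply hP'
    ext b
    simp only [Finset.mem_univ, iff_true]
    have := key (b - p).val
    rwa [ZMod.natCast_zmod_val, add_sub_cancel] at this
  refine Finset.sum_involution
    (fun A _ => if a + 1 ∈ A then A.erase (a + 1) else insert (a + 1) A) ?_ ?_ ?_ ?_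
  · intro A hA
    split_ifs with h
    · have := Finset.card_erase_add_one h
      rw [← this, pow_succ]; ring
    · rw [Finset.card_insert_of_notMem h, pow_succ]; ring
  · intro A hA _ he
    split_ifs at he with h
    · rw [← he] at h; simp at h
    · apply h; rw [← he]; simp
  · intro A hA
    rw [Finset.mem_filter_univ] at hA ⊢
    obtain ⟨hA, hPA⟩ := hA
    obtain ⟨haA, harA⟩ := hPA a haP
    have hnot := hA.add_one_add_notMem hr haA harA
    split_ifs with h
    · refine ⟨hA.mono (Finset.erase_subset _ _), fun p hp => ⟨?_, ?_⟩⟩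
      · exact Finset.mem_erase.2 ⟨fun e => hxP (e ▸ hp), (hPA p hp).1⟩
      · exact fun hm => (hPA p hp).2 (Finset.mem_of_mem_erase hm)
    · refine ⟨hA.insert fun b hb => ?_, fun p hp => ⟨Finset.mem_insert_of_mem (hPA p hp).1, ?_⟩⟩
      · by_contra! hlt
        have := eq_neg_of_lt_cycNorm_sub_one (hA a haA b hb) (by rwa [sub_sub])
        apply harA
        rwa [show a - (r : ZMod n) = b by linear_combination -this]
      · intro hm
        rcases Finset.mem_insert.1 hm with hm | hm
        · apply hnot
          rw [← hm, sub_add_cancel]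
          exact (hPA p hp).1
        · exact (hPA p hp).2 hm
  · intro A hA
    by_cases h : a + 1 ∈ A
    · simp [h, Finset.insert_erase]
    · simp [h]

/-- Only the simplices closed under translation by `-r` contribute to the alternating sum. -/
lemma sum_neg_one_pow_card_eq_sum_closed {n r : ℕ} [NeZero n] (hr : 2 * r < n) :
    ∑ A : Finset (ZMod n) with IsRipsSimplex r A, (-1 : ℤ) ^ A.card =
      ∑ A : Finset (ZMod n) with IsRipsSimplex r A ∧ ∀ a ∈ A, a - (r : ZMod n) ∈ A, (-1 : ℤ) ^ A.card := by
  have expand : ∀ A : Finset (ZMod n),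
      (∑ P : Finset (ZMod n), if ∀ p ∈ P, p ∈ A ∧ p - r ∉ A then (-1 : ℤ) ^ P.card else 0) =
        if ∀ a ∈ A, a - r ∈ A then 1 else 0 := by
    intro A
    have h := Finset.sum_powerset_neg_one_pow_card (x := A.filter fun a => a - (r : ZMod n) ∉ A)
    rw [← Finset.sum_filter]
    convert h using 2
    · ext P
      simp [Finset.subset_iff]
    · simp [Finset.filter_eq_empty_iff]
  rw [← Finset.filter_filter, Finset.sum_filter (fun A : Finset (ZMod n) => ∀ a ∈ A, a - (r : ZMod n) ∈ A)]
  have step : ∀ A : Finset (ZMod n),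
      (if ∀ a ∈ A, a - (r : ZMod n) ∈ A then (-1 : ℤ) ^ A.card else 0) =
        ∑ P : Finset (ZMod n), (-1 : ℤ) ^ P.card *
          if ∀ p ∈ P, p ∈ A ∧ p - r ∉ A then (-1 : ℤ) ^ A.card else 0 := by
    intro A
    have := congrArg (fun z => (-1 : ℤ) ^ A.card * z) (expand A)
    simp only [mul_ite, mul_one, mul_zero] at this
    rw [← this, Finset.mul_sum]
    refine Finset.sum_congr rfl fun P _ => ?_
    split_ifs <;> ring
  simp_rw [step]
  rw [Finset.sum_comm]
  simp_rw [← Finset.mul_sum, ← Finset.sum_filter, Finset.filter_filter]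
  symm
  rw [Finset.sum_eq_single ∅]
  · simp
  · intro P _ hP
    by_cases hu : P = Finset.univ
    · have : (Finset.univ.filter fun A : Finset (ZMod n) =>
          IsRipsSimplex r A ∧ ∀ p ∈ P, p ∈ A ∧ p - (r : ZMod n) ∉ A) = ∅ := by
        rw [Finset.filter_eq_empty_iff]
        rintro A - ⟨-, h⟩
        subst hu
        exact (h 0 (by simp)).2 (h _ (by simp)).1
      rw [this]; simp
    · rw [sum_neg_one_pow_card_eq_zero hr P (Finset.nonempty_iff_ne_empty.2 hP) hu, mul_zero]
  · simp

/-- A nonempty simplex closed under translation by `-r` is a coset of the subgroup generated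
by `n - 2r`. -/
lemma IsRipsSimplex.odd_card {n r : ℕ} [NeZero n] (hr : 2 * r < n) (hn : Odd n)
    {A : Finset (ZMod n)} (hA : IsRipsSimplex r A) (hne : A.Nonempty)
    (hcl : ∀ a ∈ A, a - r ∈ A) : Odd A.card := by
  obtain ⟨a, ha⟩ := hne
  set m := n - 2 * r with hm
  have hmr : (m : ZMod n) = -(2 * r) := by
    rw [hm, Nat.cast_sub hr.le]; simp
  have hadd : ∀ k : ℕ, a + k * m ∈ A := by
    intro k
    induction k with
    | zero => simpa using ha
    | succ k ih =>
      convert hcl _ (hcl _ ih) using 1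
      push_cast; rw [hmr]; ring
  have hcoset : (A : Set (ZMod n)) =
      (fun x => a + x) '' (AddSubgroup.zmultiples (m : ZMod n) : Set (ZMod n)) := by
    ext b
    simp only [Set.mem_image, SetLike.mem_coe]
    constructor
    · intro hb
      refine ⟨b - a, ?_, by ring⟩
      set e := (b - a).val with he
      have hbe : b - a = ((e : ℕ) : ZMod n) := by rw [he, ZMod.natCast_zmod_val]
      have hdiv : b - a = (e / m : ℕ) * (m : ZMod n) + (e % m : ℕ) := by
        rw [hbe]; exact_mod_cast congrArg _ (Nat.div_add_mod' e m).symm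
      have hlt : e % m < m := Nat.mod_lt _ (by omega)
      by_cases hs : e % m = 0
      · rw [hdiv, hs]
        exact AddSubgroup.mem_zmultiples_iff.2 ⟨((e / m : ℕ) : ℤ), by rw [zsmul_eq_mul, Int.cast_natCast]; simp⟩
      · exfalso
        have h := hA _ (hcl _ (hadd (e / m))) b hb
        have e1 : b - (a + (e / m : ℕ) * (m : ZMod n) - r) = ((e % m + r : ℕ) : ZMod n) := by
          push_cast; linear_combination hdiv
        rw [e1, cycNorm, ZMod.val_cast_of_lt (by omega)] at h
        omega
    · rintro ⟨x, hx, rfl⟩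
      rw [← mem_multiples_iff_mem_zmultiples] at hx
      obtain ⟨k, rfl⟩ := hx
      simpa using hadd k
  have hcard : A.card = addOrderOf (m : ZMod n) := by
    rw [← Nat.card_zmultiples, ← Set.ncard_coe_finset, hcoset,
      Set.ncard_image_of_injective _ (add_right_injective a)]
    rfl
  rw [hcard]
  refine hn.of_dvd_nat ?_
  simpa using addOrderOf_dvd_natCard (m : ZMod n)

/-- The Euler characteristic of the Vietoris–Rips complex of the `n`-cycle at scale `r`. -/
noncomputable def ripsEuler (n r : ℕ) [NeZero n] : ℤ :=
  ∑ A : Finset (ZMod n) with A.Nonempty ∧ IsRipsSimplex r A, (-1 : ℤ) ^ (A.card - 1)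

lemma ripsEuler_eq_card {n r : ℕ} [NeZero n] (hr : 2 * r < n) (hn : Odd n) :
    ripsEuler n r = (Finset.univ.filter fun A : Finset (ZMod n) =>
      A.Nonempty ∧ IsRipsSimplex r A ∧ ∀ a ∈ A, a - (r : ZMod n) ∈ A).card := by
  have aux : ∀ (Q : Finset (ZMod n) → Prop) [DecidablePred Q], Q ∅ →
      ∑ A with Q A, (-1 : ℤ) ^ A.card = 1 + ∑ A with A.Nonempty ∧ Q A, (-1 : ℤ) ^ A.card := by
    intro Q _ hQ
    have : (Finset.univ.filter Q) =
        insert ∅ (Finset.univ.filter fun A : Finset (ZMod n) => A.Nonempty ∧ Q A) := by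
      ext A
      rcases A.eq_empty_or_nonempty with rfl | h
      · simp [hQ]
      · simp [h, h.ne_empty]
    rw [this, Finset.sum_insert (by simp)]
    simp
  have h := sum_neg_one_pow_card_eq_sum_closed hr
  rw [aux (IsRipsSimplex r) (by simp [IsRipsSimplex]),
    aux (fun A => IsRipsSimplex r A ∧ ∀ a ∈ A, a - (r : ZMod n) ∈ A) (by simp [IsRipsSimplex])] at h
  have h1 : ripsEuler n r =
      -∑ A : Finset (ZMod n) with A.Nonempty ∧ IsRipsSimplex r A, (-1 : ℤ) ^ A.card := by
    rw [ripsEuler, ← Finset.sum_neg_distrib]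
    refine Finset.sum_congr rfl fun A hA => ?_
    have : 0 < A.card := (Finset.mem_filter.1 hA).2.1.card_pos
    obtain ⟨k, hk⟩ := Nat.exists_eq_succ_of_ne_zero this.ne'
    rw [hk]; simp [pow_succ]
  rw [h1, add_left_cancel h, ← Finset.sum_neg_distrib, Finset.card_eq_sum_ones, Nat.cast_sum]
  refine Finset.sum_congr rfl fun A hA => ?_
  obtain ⟨hne, hA, hcl⟩ := (Finset.mem_filter.1 hA).2
  simp [(hA.odd_card hr hn hne hcl).neg_one_pow]

lemma le_ripsEuler {n r m : ℕ} [NeZero n] (hn : Odd n) (hm : 2 * r + m = n) (hdvd : m ∣ n) :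
    (m : ℤ) ≤ ripsEuler n r := by
  have hn0 : n ≠ 0 := NeZero.ne n
  have hm0 : m ≠ 0 := by rintro rfl; exact hn0 (zero_dvd_iff.1 hdvd)
  have : NeZero m := ⟨hm0⟩
  obtain ⟨d, hd⟩ := hdvd
  obtain ⟨l, hl⟩ : Odd d := hn.of_dvd_nat ⟨m, by rw [hd, mul_comm]⟩
  have hrl : r = m * l := by subst hl; nlinarith
  rw [ripsEuler_eq_card (by omega) hn]
  let φ := ZMod.castHom (Dvd.intro d hd.symm) (ZMod m)
  have hφ : Function.Surjective φ := ZMod.castHom_surjective _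
  have hinj : Function.Injective fun c : ZMod m => Finset.univ.filter fun x => φ x = c := by
    intro c c' h
    obtain ⟨x, hx⟩ := hφ c
    have : x ∈ Finset.univ.filter fun x => φ x = c' := by
      have h' := congrArg (x ∈ ·) h
      simpa [hx] using h'
    rw [← hx]; simpa using this
  have hle := Finset.card_le_card_of_injOn (s := (Finset.univ : Finset (ZMod m)))
    (t := Finset.univ.filter fun A : Finset (ZMod n) =>
      A.Nonempty ∧ IsRipsSimplex r A ∧ ∀ a ∈ A, a - (r : ZMod n) ∈ A)
    (fun c : ZMod m => Finset.univ.filter fun x => φ x = c) ?_ hinj.injOn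
  · rw [Finset.card_univ, ZMod.card] at hle
    exact_mod_cast hle
  · intro c _
    simp only [Finset.coe_filter, Finset.mem_univ, true_and, Set.mem_ofPred_eq]
    refine ⟨?_, ?_, ?_⟩
    · obtain ⟨x, hx⟩ := hφ c
      exact ⟨x, by simpa using hx⟩
    · intro a ha b hb
      simp only [Finset.mem_filter, Finset.mem_univ, true_and] at ha hb
      have h0 : φ (b - a) = 0 := by rw [map_sub, ha, hb, sub_self]
      have hv : φ (((b - a).val : ℕ) : ZMod n) = 0 := by rwa [ZMod.natCast_zmod_val]
      rw [map_natCast, ZMod.natCast_eq_zero_iff] at hv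
      obtain ⟨j, hj⟩ := hv
      rw [cycNorm, hj, min_le_iff]
      rcases le_or_gt j l with h | h
      · left; rw [hrl]; exact Nat.mul_le_mul_left _ h
      · right
        have : m * (l + 1) ≤ m * j := Nat.mul_le_mul_left _ h
        have e : m * (l + 1) = m * l + m := by ring
        omega
    · intro a ha
      simp only [Finset.mem_filter, Finset.mem_univ, true_and] at ha ⊢
      rw [map_sub, ha, map_natCast, hrl]; simp

lemma cycNorm_le_half {n : ℕ} (x : ZMod n) : cycNorm x ≤ n / 2 := by
  unfold cycNorm
  omega

lemma cycNorm_eq_zero_iff {n : ℕ} [NeZero n] {x : ZMod n} : cycNorm x = 0 ↔ x = 0 := by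
  have := ZMod.val_lt x
  rw [← ZMod.val_eq_zero, cycNorm]
  omega

/-- The diameter of a set of vertices in the cycle graph on `ZMod n`. -/
def cycDiam {n : ℕ} (A : Finset (ZMod n)) : ℕ :=
  (A ×ˢ A).sup fun p => cycNorm (p.2 - p.1)

lemma cycDiam_le_iff {n r : ℕ} {A : Finset (ZMod n)} : cycDiam A ≤ r ↔ IsRipsSimplex r A := by
  simp only [cycDiam, Finset.sup_le_iff, Finset.mem_product, Prod.forall, and_imp, IsRipsSimplex]
  exact ⟨fun h a ha b hb => h a b ha hb, fun h a b ha hb => h a ha b hb⟩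

/-- The homomorphism from `ZMod n` to the circle of length `2π` whose image is `geoCycle n`. -/
noncomputable def cycleHom (n : ℕ) : ZMod n →+ AddCircle (2 * π : ℝ) :=
  ZMod.lift n ⟨zmultiplesHom _ ((2 * π / n : ℝ) : AddCircle (2 * π : ℝ)), by
    rcases eq_or_ne n 0 with rfl | h
    · simp
    · have h' : (n : ℝ) ≠ 0 := by exact_mod_cast h
      rw [zmultiplesHom_apply, natCast_zsmul, ← AddCircle.coe_nsmul, nsmul_eq_mul,
        mul_div_cancel₀ _ h', AddCircle.coe_period]⟩

lemma cycleHom_natCast (n k : ℕ) :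
    cycleHom n (k : ZMod n) = ((2 * π * k / n : ℝ) : AddCircle (2 * π : ℝ)) := by
  have : (k : ZMod n) = ((k : ℤ) : ZMod n) := by simp
  rw [this, cycleHom, ZMod.lift_coe, zmultiplesHom_apply, natCast_zsmul, ← AddCircle.coe_nsmul,
    nsmul_eq_mul]
  congr 1
  ring

lemma norm_cycleHom {n : ℕ} [NeZero n] (x : ZMod n) :
    ‖cycleHom n x‖ = 2 * π / n * cycNorm x := by
  have : Fact (0 < 2 * π) := ⟨Real.two_pi_pos⟩
  have h := AddCircle.norm_div_natCast (p := 2 * π) (m := x.val) (n := n)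
  rw [Nat.mod_eq_of_lt (ZMod.val_lt x)] at h
  conv_lhs => rw [← ZMod.natCast_zmod_val x, cycleHom_natCast]
  rw [show 2 * π * x.val / n = (x.val : ℝ) / n * (2 * π) by ring, h, cycNorm]
  ring

lemma dist_cycleHom {n : ℕ} [NeZero n] (x y : ZMod n) :
    dist (cycleHom n x) (cycleHom n y) = 2 * π / n * cycNorm (x - y) := by
  rw [dist_eq_norm, ← map_sub, norm_cycleHom]

lemma cycleHom_injective (n : ℕ) [NeZero n] : Function.Injective (cycleHom n) := by
  rw [injective_iff_map_eq_zero]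
  intro x hx
  have h := norm_cycleHom x
  have hn : (n : ℝ) ≠ 0 := by exact_mod_cast NeZero.ne n
  rw [hx, norm_zero, eq_comm, mul_eq_zero, Nat.cast_eq_zero, cycNorm_eq_zero_iff] at h
  exact h.resolve_left (div_ne_zero Real.two_pi_pos.ne' hn)

lemma geoCycle_eq_map (n : ℕ) [NeZero n] :
    geoCycle n = Finset.univ.map ⟨cycleHom n, cycleHom_injective n⟩ := by
  ext y
  simp only [geoCycle, Finset.bind_def, Finset.pure_def, Finset.sup_eq_biUnion, Finset.mem_image,
    Finset.mem_biUnion, Finset.mem_singleton, Finset.mem_range, Finset.mem_map, Finset.mem_univ,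
    true_and, Function.Embedding.coeFn_mk]
  constructor
  · rintro ⟨_, ⟨k, -, rfl⟩, rfl⟩
    exact ⟨k, cycleHom_natCast n k⟩
  · rintro ⟨x, rfl⟩
    exact ⟨x.val, ⟨x.val, ZMod.val_lt x, rfl⟩, by rw [← cycleHom_natCast, ZMod.natCast_zmod_val]⟩

lemma diam_cycleHom_image {n : ℕ} [NeZero n] {A : Finset (ZMod n)} (hA : A.Nonempty) :
    Metric.diam (cycleHom n '' A) = 2 * π / n * cycDiam A := by
  have hc : (0 : ℝ) ≤ 2 * π / n := by positivity
  apply le_antisymm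
  · refine Metric.diam_le_of_forall_dist_le (by positivity) ?_
    rintro _ ⟨a, ha, rfl⟩ _ ⟨b, hb, rfl⟩
    rw [dist_cycleHom]
    have : cycNorm (a - b) ≤ cycDiam A := cycDiam_le_iff.1 le_rfl b hb a ha
    gcongr
  · obtain ⟨⟨a, b⟩, hab, h⟩ := Finset.exists_mem_eq_sup (A ×ˢ A) (hA.product hA)
      fun p => cycNorm (p.2 - p.1)
    rw [Finset.mem_product] at hab
    rw [cycDiam, h, ← dist_cycleHom]
    exact Metric.dist_le_diam_of_mem (A.finite_toSet.image _).isBounded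
      (Set.mem_image_of_mem _ hab.2) (Set.mem_image_of_mem _ hab.1)

lemma ripsMag_geoCycle (n : ℕ) [NeZero n] (t : ℝ) :
    ripsMag (geoCycle n) t = ∑ A : Finset (ZMod n) with A.Nonempty,
      (-1 : ℝ) ^ (A.card - 1) * Real.exp (-(2 * π / n * cycDiam A) * t) := by
  rw [ripsMag, geoCycle_eq_map]
  symm
  refine Finset.sum_bij (fun A _ => A.map ⟨cycleHom n, cycleHom_injective n⟩) ?_ ?_ ?_ ?_
  · intro A hA
    rw [Finset.mem_filter_univ] at hA
    rw [Finset.mem_filter, Finset.mem_powerset]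
    exact ⟨Finset.map_subset_map.2 (Finset.subset_univ A), hA.map⟩
  · intro A _ B _ h
    exact Finset.map_injective _ h
  · intro B hB
    rw [Finset.mem_filter, Finset.mem_powerset, Finset.subset_map_iff] at hB
    obtain ⟨⟨A, -, rfl⟩, hB⟩ := hB
    exact ⟨A, by simpa using hB, rfl⟩
  · intro A hA
    rw [Finset.mem_filter_univ] at hA
    rw [Finset.card_map, Finset.coe_map, Function.Embedding.coeFn_mk, diam_cycleHom_image hA]

lemma eq_sum_range_ite_add (f : ℕ → ℝ) {k N : ℕ} (h : k ≤ N) :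
    f k = (∑ r ∈ Finset.range N, if k ≤ r then f r - f (r + 1) else 0) + f N := by
  induction N, h using Nat.le_induction with
  | base =>
    rw [Finset.sum_eq_zero, zero_add]
    intro r hr
    rw [if_neg (by simpa using hr)]
  | succ N hN ih =>
    rw [Finset.sum_range_succ, if_pos hN]
    linarith

lemma ripsMag_geoCycle_eq_sum_ripsEuler (n : ℕ) [NeZero n] (t : ℝ) :
    ripsMag (geoCycle n) t =
      (∑ r ∈ Finset.range (n / 2 + 1), (ripsEuler n r : ℝ) *
        (Real.exp (-(2 * π / n * r) * t) - Real.exp (-(2 * π / n * (r + 1 : ℕ)) * t))) +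
      ripsEuler n (n / 2) * Real.exp (-(2 * π / n * (n / 2 + 1 : ℕ)) * t) := by
  set f : ℕ → ℝ := fun r => Real.exp (-(2 * π / n * r) * t) with hf
  have hdiam : ∀ A : Finset (ZMod n), cycDiam A ≤ n / 2 := fun A =>
    cycDiam_le_iff.2 fun a _ b _ => cycNorm_le_half _
  have hχ : ∀ r, (ripsEuler n r : ℝ) = ∑ A : Finset (ZMod n) with A.Nonempty,
      if cycDiam A ≤ r then (-1 : ℝ) ^ (A.card - 1) else 0 := by
    intro r
    rw [ripsEuler, ← Finset.filter_filter, Finset.sum_filter (IsRipsSimplex r)]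
    push_cast
    refine Finset.sum_congr rfl fun A _ => ?_
    simp only [cycDiam_le_iff]
  have hterm : ∀ A : Finset (ZMod n), (-1 : ℝ) ^ (A.card - 1) * f (cycDiam A) =
      (∑ r ∈ Finset.range (n / 2 + 1),
        (if cycDiam A ≤ r then (-1 : ℝ) ^ (A.card - 1) else 0) * (f r - f (r + 1))) +
      (if cycDiam A ≤ n / 2 then (-1 : ℝ) ^ (A.card - 1) else 0) * f (n / 2 + 1) := by
    intro A
    rw [eq_sum_range_ite_add f ((hdiam A).trans (Nat.le_succ _)), if_pos (hdiam A), mul_add,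
      Finset.mul_sum]
    congr 1
    refine Finset.sum_congr rfl fun r _ => ?_
    split_ifs <;> simp
  rw [ripsMag_geoCycle]
  change ∑ A : Finset (ZMod n) with A.Nonempty, (-1 : ℝ) ^ (A.card - 1) * f (cycDiam A) =
    (∑ r ∈ Finset.range (n / 2 + 1), (ripsEuler n r : ℝ) * (f r - f (r + 1))) +
      ripsEuler n (n / 2) * f (n / 2 + 1)
  simp_rw [hterm, hχ, Finset.sum_add_distrib, Finset.sum_mul]
  rw [Finset.sum_comm]

lemma exp_sub_exp_lower_bound {n r : ℕ} {t : ℝ} (ht : 0 < t) (hn : 0 < n) (hr : 2 * r ≤ n) :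
    Real.exp (-(π * t)) * (2 * π * t / (1 + 2 * π * t)) / n ≤
      Real.exp (-(2 * π / n * r) * t) - Real.exp (-(2 * π / n * (r + 1 : ℕ)) * t) := by
  have hπ := Real.pi_pos
  have hn' : (1 : ℝ) ≤ n := by exact_mod_cast hn
  have hr' : 2 * (r : ℝ) ≤ n := by exact_mod_cast hr
  set x := 2 * π * t / n with hx
  have hx0 : 0 < x := by positivity
  have hxle : x ≤ 2 * π * t := div_le_self (by positivity) hn'
  have hsplit : Real.exp (-(2 * π / n * (r + 1 : ℕ)) * t) =
      Real.exp (-(2 * π / n * r) * t) * Real.exp (-x) := by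
    rw [← Real.exp_add, hx]
    push_cast
    congr 1
    ring
  have h1 : Real.exp (-(π * t)) ≤ Real.exp (-(2 * π / n * r) * t) := by
    apply Real.exp_le_exp.2
    have : 2 * π / n * r ≤ π := by
      rw [div_mul_eq_mul_div, div_le_iff₀ (by positivity)]
      nlinarith
    nlinarith
  have h2 : x / (1 + 2 * π * t) ≤ 1 - Real.exp (-x) := by
    have hexp : Real.exp (-x) ≤ (1 + x)⁻¹ := by
      rw [Real.exp_neg]
      exact inv_anti₀ (by positivity) (by linarith [Real.add_one_le_exp x])
    have : x / (1 + 2 * π * t) ≤ x / (1 + x) := by gcongr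
    have e : x / (1 + x) = 1 - (1 + x)⁻¹ := by field_simp; ring
    linarith
  calc Real.exp (-(π * t)) * (2 * π * t / (1 + 2 * π * t)) / n
      = Real.exp (-(π * t)) * (x / (1 + 2 * π * t)) := by rw [hx]; ring
    _ ≤ Real.exp (-(2 * π / n * r) * t) * (1 - Real.exp (-x)) := by gcongr
    _ = _ := by rw [hsplit]; ring

lemma ripsEuler_nonneg {n r : ℕ} [NeZero n] (hr : 2 * r < n) (hn : Odd n) :
    0 ≤ ripsEuler n r := by
  rw [ripsEuler_eq_card hr hn]
  exact Int.natCast_nonneg _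

/-- The Rips magnitude of an odd cycle dominates a multiple of any sum of reciprocals of distinct
divisors. -/
lemma mul_sum_inv_le_ripsMag_geoCycle {n : ℕ} (hn : Odd n) {t : ℝ} (ht : 0 < t)
    (D : Finset ℕ) (hD : ∀ d ∈ D, d ∣ n) :
    Real.exp (-(π * t)) * (2 * π * t / (1 + 2 * π * t)) * ∑ d ∈ D, (d : ℝ)⁻¹ ≤
      ripsMag (geoCycle n) t := by
  have hpos : 0 < n := hn.pos
  have : NeZero n := ⟨hpos.ne'⟩
  have hπ := Real.pi_pos
  set c := Real.exp (-(π * t)) * (2 * π * t / (1 + 2 * π * t)) with hc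
  have hc0 : 0 ≤ c := by positivity
  have hodd := Nat.odd_iff.1 hn
  set F : ℕ → ℝ := fun r => (ripsEuler n r : ℝ) *
    (Real.exp (-(2 * π / n * r) * t) - Real.exp (-(2 * π / n * (r + 1 : ℕ)) * t)) with hF
  have hdiff : ∀ r, 2 * r < n → c / n ≤
      Real.exp (-(2 * π / n * r) * t) - Real.exp (-(2 * π / n * (r + 1 : ℕ)) * t) :=
    fun r hr => exp_sub_exp_lower_bound ht hpos hr.le
  have hF0 : ∀ r, 2 * r < n → 0 ≤ F r := fun r hr =>
    mul_nonneg (by exact_mod_cast ripsEuler_nonneg hr hn)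
      ((by positivity : 0 ≤ c / n).trans (hdiff r hr))
  have hquot : ∀ d ∈ D, 2 * ((n - n / d) / 2) + n / d = n := by
    intro d hd
    have hq : n / d ∣ n := Nat.div_dvd_of_dvd (hD d hd)
    have h1 := Nat.odd_iff.1 (hn.of_dvd_nat hq)
    have h2 := Nat.le_of_dvd hpos hq
    omega
  have hqpos : ∀ d ∈ D, 0 < n / d := fun d hd =>
    Nat.div_pos (Nat.le_of_dvd hpos (hD d hd)) (Nat.pos_of_dvd_of_pos (hD d hd) hpos)
  have hinj : Set.InjOn (fun d => (n - n / d) / 2) (D : Set ℕ) := by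
    intro d hd e he h
    have h' : (n - n / d) / 2 = (n - n / e) / 2 := h
    have hde : n / d = n / e := by
      have := hquot d hd
      have := hquot e he
      omega
    have h1 := Nat.div_mul_cancel (hD d hd)
    have h2 := Nat.div_mul_cancel (hD e he)
    rw [← hde] at h2
    exact Nat.eq_of_mul_eq_mul_left (hqpos d hd) (h1.trans h2.symm)
  rw [ripsMag_geoCycle_eq_sum_ripsEuler]
  have hlast : 0 ≤ (ripsEuler n (n / 2) : ℝ) *
      Real.exp (-(2 * π / n * (n / 2 + 1 : ℕ)) * t) :=
    mul_nonneg (by exact_mod_cast ripsEuler_nonneg (by omega) hn) (Real.exp_pos _).le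
  refine le_trans ?_ (le_add_of_nonneg_right hlast)
  calc c * ∑ d ∈ D, (d : ℝ)⁻¹ ≤ ∑ d ∈ D, F ((n - n / d) / 2) := by
        rw [Finset.mul_sum]
        refine Finset.sum_le_sum fun d hd => ?_
        have hq := hquot d hd
        have hlt : 2 * ((n - n / d) / 2) < n := by have := hqpos d hd; omega
        have hχ : ((n / d : ℕ) : ℝ) ≤ ripsEuler n ((n - n / d) / 2) := by
          have h := le_ripsEuler hn hq (Nat.div_dvd_of_dvd (hD d hd))
          rw [← Int.cast_natCast (n / d)]
          exact Int.cast_le.2 h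
        have hd0 : (d : ℝ) ≠ 0 := by
          exact_mod_cast (Nat.pos_of_dvd_of_pos (hD d hd) hpos).ne'
        have hn0 : (n : ℝ) ≠ 0 := by exact_mod_cast hpos.ne'
        calc c * (d : ℝ)⁻¹ = ((n / d : ℕ) : ℝ) * (c / n) := by
              rw [Nat.cast_div (hD d hd) hd0]; field_simp
          _ ≤ F ((n - n / d) / 2) :=
              mul_le_mul hχ (hdiff _ hlt) (by positivity) ((Nat.cast_nonneg _).trans hχ)
    _ = ∑ r ∈ D.image fun d => (n - n / d) / 2, F r := (Finset.sum_image hinj).symm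
    _ ≤ ∑ r ∈ Finset.range (n / 2 + 1), F r := by
        refine Finset.sum_le_sum_of_subset_of_nonneg ?_ ?_
        · intro r hr
          obtain ⟨d, -, rfl⟩ := Finset.mem_image.1 hr
          exact Finset.mem_range.2 (Nat.lt_succ_of_le (Nat.div_le_div_right (Nat.sub_le _ _)))
        · intro r hr _
          rw [Finset.mem_range] at hr
          exact hF0 r (by omega)

lemma tendsto_sum_range_inv_odd :
    Filter.Tendsto (fun K => ∑ k ∈ Finset.range K, ((2 * k + 1 : ℕ) : ℝ)⁻¹)
      Filter.atTop Filter.atTop := by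
  refine Filter.tendsto_atTop_mono (fun K => ?_)
    (Real.tendsto_sum_range_one_div_nat_succ_atTop.const_mul_atTop (by norm_num : (0 : ℝ) < 1 / 2))
  rw [Finset.mul_sum]
  refine Finset.sum_le_sum fun k _ => ?_
  rw [one_div_mul_one_div, one_div]
  apply inv_anti₀ (by positivity)
  push_cast
  linarith

/-- for every `t > 0`, the sequence `n ↦ |tC_n^geo|_Rips` is unbounded
above (equivalently, its limsup is `+∞`). -/
theorem ripsMag_geoCycle_unbounded (t : ℝ) (ht : 0 < t) :
    ¬ BddAbove (Set.range fun n : ℕ => ripsMag (geoCycle n) t) := by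
  rintro ⟨M, hM⟩
  have hπ := Real.pi_pos
  have hc : 0 < Real.exp (-(π * t)) * (2 * π * t / (1 + 2 * π * t)) := by positivity
  obtain ⟨K, hK⟩ :=
    ((tendsto_sum_range_inv_odd.const_mul_atTop hc).eventually_gt_atTop M).exists
  set n := ∏ k ∈ Finset.range K, (2 * k + 1) with hn
  have hodd : Odd n := Finset.prod_induction _ Odd (fun _ _ => Odd.mul) odd_one
    fun k _ => odd_two_mul_add_one k
  have h := mul_sum_inv_le_ripsMag_geoCycle hodd ht
    ((Finset.range K).image fun k => 2 * k + 1) fun d hd => by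
      obtain ⟨k, hk, rfl⟩ := Finset.mem_image.1 hd
      exact Finset.dvd_prod_of_mem (fun k => 2 * k + 1) hk
  rw [Finset.sum_image fun a _ b _ hab => by simpa using hab] at h
  exact absurd (hM ⟨n, rfl⟩) (not_le.2 (hK.trans_le h))
end
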